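/- arXiv:2101.12530 — 12 statements merged into one kernel-verified Lean document; each statement's English description precedes it below -/
import Mathlib

section
/- Let a, ȧ ∈ ℂ^{N_t} and b, ḃ ∈ ℂ^{N_r} satisfy aᴴȧ = 0 and bᴴḃ = 0, let A = b aᴴ and Ȧ = ḃ aᴴ + b ȧᴴ, and let R = w wᴴ for a vector w ∈ ℂ^{N_t}. Then: (i) tr(AᴴA R) = ‖b‖² |aᴴw|²; (ii) tr(ȦᴴA R) = ‖b‖² (aᴴw)(wᴴȧ); (iii) tr(ȦᴴȦ R) = ‖ḃ‖² |aᴴw|² + ‖b‖² |ȧᴴw|²; and consequently (iv) tr(ȦᴴȦ R)·tr(AᴴA R) − |tr(ȦᴴA R)|² = ‖b‖² ‖ḃ‖² |aᴴw|⁴. In particular, if in addition b ≠ 0, ḃ ≠ 0, aᴴw ≠ 0, and α ∈ ℂ is nonzero, L > 0, σ_R² > 0, then the Cramér–Rao bound CRB(θ) := σ_R² tr(AᴴA R) / (2|α|² L (tr(ȦᴴȦ R)·tr(AᴴA R) − |tr(ȦᴴA R)|²)) equals σ_R² / (2|α|² L ‖ḃ‖² |aᴴw|²). -/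
/-!
Since `R = w wᴴ` has rank one, `tr(Mᴴ N R) = (M w)ᴴ (N w)` (`trace_conjTranspose_mul_mul_rankOne`),
so the three traces are inner products of the two vectors `A w = (aᴴw) b` and
`Ȧ w = (aᴴw) ḃ + (ȧᴴw) b`. As `b ⟂ ḃ`, expanding them leaves only multiples of `‖b‖²` and `‖ḃ‖²`,
which gives (i)-(iii). In (iv) the terms `‖b‖⁴ |aᴴw|² |ȧᴴw|²` cancel, and the formula for the
Cramér-Rao bound follows by cancelling `‖b‖² |aᴴw|²`.
-/

open Matrix

theorem trace_conjTranspose_mul_mul_rankOne {m n : Type*} [Fintype m] [Fintype n]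
    (M N : Matrix m n ℂ) (w : n → ℂ) :
    trace (Mᴴ * N * vecMulVec w (star w)) = star (M *ᵥ w) ⬝ᵥ (N *ᵥ w) := by
  rw [mul_vecMulVec, trace_vecMulVec, dotProduct_comm, star_mulVec, ← mulVec_mulVec,
    dotProduct_mulVec]

theorem star_dotProduct_self_eq_sum_normSq {n : Type*} [Fintype n] (v : n → ℂ) :
    star v ⬝ᵥ v = ((∑ i, Complex.normSq (v i) : ℝ) : ℂ) := by
  simp [dotProduct, Complex.normSq_eq_conj_mul_self]

theorem sum_normSq_ne_zero {n : Type*} [Fintype n] {v : n → ℂ} (hv : v ≠ 0) :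
    (∑ i, Complex.normSq (v i)) ≠ 0 := by
  intro h
  rw [Finset.sum_eq_zero_iff_of_nonneg fun i _ => Complex.normSq_nonneg _] at h
  exact hv (funext fun i => Complex.normSq_eq_zero.mp (h i (Finset.mem_univ i)))

/-- Trace identities for the point-target CRB, and the resulting closed form of the CRB.
Here `A = b aᴴ`, `Ȧ = ḃ aᴴ + b ȧᴴ`, `R = w wᴴ`, with `aᴴȧ = 0` and `bᴴḃ = 0`. -/
theorem stmt1 {Nt Nr : ℕ} (a ad : Fin Nt → ℂ) (b bd : Fin Nr → ℂ) (w : Fin Nt → ℂ)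
    (horth_a : star a ⬝ᵥ ad = 0) (horth_b : star b ⬝ᵥ bd = 0)
    (A : Matrix (Fin Nr) (Fin Nt) ℂ) (hA : A = vecMulVec b (star a))
    (Ad : Matrix (Fin Nr) (Fin Nt) ℂ)
    (hAd : Ad = vecMulVec bd (star a) + vecMulVec b (star ad))
    (R : Matrix (Fin Nt) (Fin Nt) ℂ) (hR : R = vecMulVec w (star w)) :
    -- (i) tr(AᴴA R) = ‖b‖² |aᴴw|²
    trace (Aᴴ * A * R) =
      (((∑ i, Complex.normSq (b i)) * Complex.normSq (star a ⬝ᵥ w) : ℝ) : ℂ)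
    ∧ -- (ii) tr(ȦᴴA R) = ‖b‖² (aᴴw)(wᴴȧ)
    trace (Adᴴ * A * R) =
      ((∑ i, Complex.normSq (b i) : ℝ) : ℂ) * (star a ⬝ᵥ w) * (star w ⬝ᵥ ad)
    ∧ -- (iii) tr(ȦᴴȦ R) = ‖ḃ‖² |aᴴw|² + ‖b‖² |ȧᴴw|²
    trace (Adᴴ * Ad * R) =
      (((∑ i, Complex.normSq (bd i)) * Complex.normSq (star a ⬝ᵥ w)
        + (∑ i, Complex.normSq (b i)) * Complex.normSq (star ad ⬝ᵥ w) : ℝ) : ℂ)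
    ∧ -- (iv) tr(ȦᴴȦR)·tr(AᴴAR) − |tr(ȦᴴAR)|² = ‖b‖²‖ḃ‖²|aᴴw|⁴
    (trace (Adᴴ * Ad * R)).re * (trace (Aᴴ * A * R)).re
        - Complex.normSq (trace (Adᴴ * A * R))
      = (∑ i, Complex.normSq (b i)) * (∑ i, Complex.normSq (bd i))
          * (Complex.normSq (star a ⬝ᵥ w)) ^ 2
    ∧ -- CRB(θ) = σ_R² / (2|α|² L ‖ḃ‖² |aᴴw|²)
    (∀ (α : ℂ) (L σR2 : ℝ), α ≠ 0 → 0 < L → 0 < σR2 →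
      b ≠ 0 → bd ≠ 0 → star a ⬝ᵥ w ≠ 0 →
      σR2 * (trace (Aᴴ * A * R)).re /
          (2 * Complex.normSq α * L *
            ((trace (Adᴴ * Ad * R)).re * (trace (Aᴴ * A * R)).re
              - Complex.normSq (trace (Adᴴ * A * R))))
        = σR2 /
          (2 * Complex.normSq α * L * (∑ i, Complex.normSq (bd i))
            * Complex.normSq (star a ⬝ᵥ w))) := by
  have hAw : A *ᵥ w = (star a ⬝ᵥ w) • b := by
    rw [hA, vecMulVec_mulVec, op_smul_eq_smul]
  have hAdw : Ad *ᵥ w = (star a ⬝ᵥ w) • bd + (star ad ⬝ᵥ w) • b := by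
    rw [hAd, add_mulVec, vecMulVec_mulVec, vecMulVec_mulVec, op_smul_eq_smul, op_smul_eq_smul]
  have horth_b' : star bd ⬝ᵥ b = 0 := by
    rw [star_dotProduct, horth_b, star_zero]
  have hwad : star w ⬝ᵥ ad = star (star ad ⬝ᵥ w) := by
    rw [← star_dotProduct_star, star_star]
  have h1 : trace (Aᴴ * A * R) =
      (((∑ i, Complex.normSq (b i)) * Complex.normSq (star a ⬝ᵥ w) : ℝ) : ℂ) := by
    rw [hR, trace_conjTranspose_mul_mul_rankOne, hAw, star_smul, smul_dotProduct,
      dotProduct_smul, star_dotProduct_self_eq_sum_normSq, Complex.ofReal_mul,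
      Complex.normSq_eq_conj_mul_self (z := star a ⬝ᵥ w)]
    simp only [smul_eq_mul, starRingEnd_apply]
    ring
  have h2 : trace (Adᴴ * A * R) =
      ((∑ i, Complex.normSq (b i) : ℝ) : ℂ) * (star a ⬝ᵥ w) * (star w ⬝ᵥ ad) := by
    rw [hR, trace_conjTranspose_mul_mul_rankOne, hAw, hAdw, hwad]
    simp only [star_add, star_smul, add_dotProduct, smul_dotProduct, dotProduct_smul,
      horth_b', star_dotProduct_self_eq_sum_normSq, smul_eq_mul]
    ring
  have h3 : trace (Adᴴ * Ad * R) =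
      (((∑ i, Complex.normSq (bd i)) * Complex.normSq (star a ⬝ᵥ w)
        + (∑ i, Complex.normSq (b i)) * Complex.normSq (star ad ⬝ᵥ w) : ℝ) : ℂ) := by
    rw [hR, trace_conjTranspose_mul_mul_rankOne, hAdw, Complex.ofReal_add, Complex.ofReal_mul,
      Complex.ofReal_mul, Complex.normSq_eq_conj_mul_self (z := star a ⬝ᵥ w),
      Complex.normSq_eq_conj_mul_self (z := star ad ⬝ᵥ w)]
    simp only [star_add, star_smul, add_dotProduct, dotProduct_add, smul_dotProduct,
      dotProduct_smul, horth_b, horth_b', star_dotProduct_self_eq_sum_normSq, smul_eq_mul,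
      starRingEnd_apply]
    ring
  have h4 : (trace (Adᴴ * Ad * R)).re * (trace (Aᴴ * A * R)).re
        - Complex.normSq (trace (Adᴴ * A * R))
      = (∑ i, Complex.normSq (b i)) * (∑ i, Complex.normSq (bd i))
          * (Complex.normSq (star a ⬝ᵥ w)) ^ 2 := by
    rw [h1, h2, h3, Complex.ofReal_re, Complex.ofReal_re, Complex.normSq_mul, Complex.normSq_mul,
      Complex.normSq_ofReal, hwad, ← starRingEnd_apply (star ad ⬝ᵥ w), Complex.normSq_conj]
    ring
  refine ⟨h1, h2, h3, h4, fun α L σR2 hα hL _ hb hbd haw => ?_⟩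
  have hb' := sum_normSq_ne_zero hb
  have hbd' := sum_normSq_ne_zero hbd
  have haw' : Complex.normSq (star a ⬝ᵥ w) ≠ 0 := mt Complex.normSq_eq_zero.mp haw
  have hα' : Complex.normSq α ≠ 0 := mt Complex.normSq_eq_zero.mp hα
  rw [h4, h1, Complex.ofReal_re]
  field_simp
end

section
/- Consider Problem (P1). If w is an optimal solution of (P1) and aᴴw ≠ 0, then w lies in the complex linear span of {a, h}. -/
/-!
Let `p` be the orthogonal projection of `w` onto the span of `{a, h}`
(`exists_projection_span_pair`). Then `p` attains the same values `aᴴp = aᴴw`, `hᴴp = hᴴw`, and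
`‖w‖² = ‖p‖² + ‖w - p‖²`. Since `aᴴp ≠ 0`, `p ≠ 0` and `p` can be rescaled by the factor
`t = ‖w‖ / ‖p‖ ≥ 1`. The point `t p` is feasible with objective `t² |aᴴw|²`, so optimality of `w`
gives `t ≤ 1`, hence `‖w - p‖ = 0` and `w = p`.
-/

open Matrix

/-- Feasibility for Problem (P1): `|hᴴw|² ≥ Γσ²` and `‖w‖² ≤ P_T`. -/
def P1Feasible {N : ℕ} (h : Fin N → ℂ) (Γ σ2 PT : ℝ) (w : Fin N → ℂ) : Prop :=
  Γ * σ2 ≤ Complex.normSq (star h ⬝ᵥ w) ∧ ∑ i, Complex.normSq (w i) ≤ PT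

/-- Optimality for Problem (P1): feasible, and `|aᴴw|²` at least that of every feasible point. -/
def P1Optimal {N : ℕ} (a h : Fin N → ℂ) (Γ σ2 PT : ℝ) (w : Fin N → ℂ) : Prop :=
  P1Feasible h Γ σ2 PT w ∧
  ∀ w' : Fin N → ℂ, P1Feasible h Γ σ2 PT w' →
    Complex.normSq (star a ⬝ᵥ w') ≤ Complex.normSq (star a ⬝ᵥ w)

/-- Orthogonal projection onto the span of `{a, h}`, in coordinates: the projection `p` of `w` has the
same products with `a` and `h` as `w`, and Pythagoras holds for `w = p + (w - p)`. -/
lemma exists_projection_span_pair {N : ℕ} (a h w : Fin N → ℂ) :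
    ∃ p ∈ Submodule.span ℂ ({a, h} : Set (Fin N → ℂ)),
      star a ⬝ᵥ p = star a ⬝ᵥ w ∧ star h ⬝ᵥ p = star h ⬝ᵥ w ∧
      ∑ i, Complex.normSq (w i) =
        ∑ i, Complex.normSq (p i) + ∑ i, Complex.normSq ((w - p) i) := by
  set A : EuclideanSpace ℂ (Fin N) := WithLp.toLp 2 a with hA
  set H : EuclideanSpace ℂ (Fin N) := WithLp.toLp 2 h with hH
  set W : EuclideanSpace ℂ (Fin N) := WithLp.toLp 2 w with hW
  set K := Submodule.span ℂ ({A, H} : Set (EuclideanSpace ℂ (Fin N))) with hK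
  have hmem : K.starProjection W ∈ K := Submodule.starProjection_apply_mem K W
  have horth : ∀ v ∈ K, inner ℂ v (W - K.starProjection W) = 0 := fun v hv =>
    Submodule.inner_right_of_mem_orthogonal hv (Submodule.sub_starProjection_mem_orthogonal W)
  generalize K.starProjection W = P at hmem horth
  have hdot : ∀ v : Fin N → ℂ, WithLp.toLp 2 v ∈ K → star v ⬝ᵥ P.ofLp = star v ⬝ᵥ w := by
    intro v hv
    have h1 := horth _ hv
    rw [inner_sub_right, sub_eq_zero, EuclideanSpace.inner_eq_star_dotProduct,
      EuclideanSpace.inner_eq_star_dotProduct] at h1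
    rw [dotProduct_comm (star v) P.ofLp, dotProduct_comm (star v) w]
    exact h1.symm
  have hnorm : ∀ v : EuclideanSpace ℂ (Fin N), ∑ i, Complex.normSq (v.ofLp i) = ‖v‖ * ‖v‖ := by
    intro v
    rw [← sq, EuclideanSpace.norm_sq_eq]
    simp [Complex.normSq_eq_norm_sq]
  refine ⟨P.ofLp, ?_, hdot a (Submodule.subset_span (by simp [hA])),
    hdot h (Submodule.subset_span (by simp [hH])), ?_⟩
  · obtain ⟨x, y, hxy⟩ := Submodule.mem_span_pair.1 hmem
    exact Submodule.mem_span_pair.2 ⟨x, y, by rw [← hxy]; rfl⟩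
  · have h1 := norm_add_sq_eq_norm_sq_add_norm_sq_of_inner_eq_zero P (W - P) (horth P hmem)
    rw [add_sub_cancel] at h1
    rw [← hnorm W, ← hnorm P, ← hnorm (W - P)] at h1
    exact h1

/-- Any optimal solution of (P1) with `aᴴw ≠ 0` lies in the complex span of `{a, h}`. -/
theorem stmt3 {N : ℕ} (a h : Fin N → ℂ) (Γ σ2 PT : ℝ)
    (hΓ : 0 < Γ) (hσ : 0 < σ2) (hPT : 0 < PT)
    (w : Fin N → ℂ) (hw : P1Optimal a h Γ σ2 PT w) (haw : star a ⬝ᵥ w ≠ 0) :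
    w ∈ Submodule.span ℂ ({a, h} : Set (Fin N → ℂ)) := by
  obtain ⟨p, hp, hpa, hph, hpy⟩ := exists_projection_span_pair a h w
  obtain ⟨⟨hf1, hf2⟩, hopt⟩ := hw
  have hnn : ∀ v : Fin N → ℂ, 0 ≤ ∑ i, Complex.normSq (v i) := fun v =>
    Finset.sum_nonneg fun i _ => Complex.normSq_nonneg _
  have hzero : ∀ v : Fin N → ℂ, ∑ i, Complex.normSq (v i) = 0 → v = 0 := by
    intro v hv
    funext i
    exact Complex.normSq_eq_zero.1
      ((Finset.sum_eq_zero_iff_of_nonneg fun i _ => Complex.normSq_nonneg _).1 hv i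
        (Finset.mem_univ i))
  have hp0 : 0 < ∑ i, Complex.normSq (p i) := by
    refine lt_of_le_of_ne (hnn p) fun h0 => haw ?_
    rw [← hpa, hzero p h0.symm, dotProduct_zero]
  have hd := hnn (w - p)
  set r : ℝ := (∑ i, Complex.normSq (w i)) / ∑ i, Complex.normSq (p i) with hr
  have hr1 : 1 ≤ r := by rw [hr, one_le_div hp0]; linarith
  have ht : Complex.normSq ((√r : ℝ) : ℂ) = r := by
    rw [Complex.normSq_ofReal, Real.mul_self_sqrt (by linarith)]
  have hfeas : P1Feasible h Γ σ2 PT (((√r : ℝ) : ℂ) • p) := by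
    constructor
    · rw [dotProduct_smul, hph, smul_eq_mul, Complex.normSq_mul, ht]
      nlinarith [Complex.normSq_nonneg (star h ⬝ᵥ w)]
    · simp only [Pi.smul_apply, smul_eq_mul, Complex.normSq_mul, ht]
      rw [← Finset.mul_sum, hr, div_mul_cancel₀ _ hp0.ne']
      exact hf2
  have hle := hopt _ hfeas
  rw [dotProduct_smul, hpa, smul_eq_mul, Complex.normSq_mul, ht] at hle
  have hr2 : r ≤ 1 := (mul_le_iff_le_one_left (Complex.normSq_pos.2 haw)).1 hle
  rw [hr, div_le_one hp0] at hr2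
  have hwp : w - p = 0 := hzero _ (by linarith)
  rwa [sub_eq_zero.1 hwp]
end

section
/- Consider Problem (P1) with a ≠ 0. If P_T |hᴴa|² > ‖a‖² Γ σ², then w = √(P_T) · a/‖a‖ is an optimal solution of (P1), with optimal value P_T ‖a‖². -/
/-!
The objective is bounded by Cauchy–Schwarz, `|aᴴw'|² ≤ ‖a‖² ‖w'‖² ≤ P_T ‖a‖²`, and this bound is
attained by the multiple of `a` with norm `√P_T`. The hypothesis on `h`, divided by `‖a‖² > 0`, says
that this multiple satisfies the remaining constraint `|hᴴw|² ≥ Γσ²`.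
-/

open Matrix

/-- The Cauchy–Schwarz inequality for the Hermitian pairing `aᴴw`. -/
lemma normSq_star_dotProduct_le {N : ℕ} (a w : Fin N → ℂ) :
    Complex.normSq (star a ⬝ᵥ w) ≤
      (∑ i, Complex.normSq (a i)) * ∑ i, Complex.normSq (w i) := by
  simp only [Complex.normSq_eq_norm_sq]
  have h1 : ‖star a ⬝ᵥ w‖ ≤ ∑ i, ‖a i‖ * ‖w i‖ := by
    refine (norm_sum_le _ _).trans (le_of_eq ?_)
    simp
  calc ‖star a ⬝ᵥ w‖ ^ 2 ≤ (∑ i, ‖a i‖ * ‖w i‖) ^ 2 := by gcongr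
    _ ≤ _ := Finset.sum_mul_sq_le_sq_mul_sq _ _ _

lemma normSq_star_dotProduct_self {N : ℕ} (a : Fin N → ℂ) :
    Complex.normSq (star a ⬝ᵥ a) = (∑ i, Complex.normSq (a i)) ^ 2 := by
  have h1 : star a ⬝ᵥ a = ((∑ i, Complex.normSq (a i) : ℝ) : ℂ) := by
    simp [dotProduct, Complex.normSq_eq_conj_mul_self]
  rw [h1, Complex.normSq_ofReal, sq]

/-- If `P_T |hᴴa|² > ‖a‖² Γ σ²`, then `w = √P_T · a/‖a‖` is an optimal solution of (P1),
with optimal value `P_T ‖a‖²`. -/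
theorem stmt4 {N : ℕ} (a h : Fin N → ℂ) (Γ σ2 PT : ℝ)
    (hΓ : 0 < Γ) (hσ : 0 < σ2) (hPT : 0 < PT) (ha : a ≠ 0)
    (hcond : (∑ i, Complex.normSq (a i)) * (Γ * σ2) < PT * Complex.normSq (star h ⬝ᵥ a))
    (w : Fin N → ℂ)
    (hwdef : w = ((Real.sqrt PT / Real.sqrt (∑ i, Complex.normSq (a i)) : ℝ) : ℂ) • a) :
    P1Optimal a h Γ σ2 PT w ∧
    Complex.normSq (star a ⬝ᵥ w) = PT * ∑ i, Complex.normSq (a i) := by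
  have hS : 0 < ∑ i, Complex.normSq (a i) := by
    obtain ⟨i, hi⟩ := Function.ne_iff.mp ha
    exact Finset.sum_pos' (fun j _ => Complex.normSq_nonneg _)
      ⟨i, Finset.mem_univ i, Complex.normSq_pos.mpr hi⟩
  have hself := normSq_star_dotProduct_self a
  have hCS := normSq_star_dotProduct_le a
  have hsum (c : ℂ) : ∑ i, Complex.normSq ((c • a) i) =
      Complex.normSq c * ∑ i, Complex.normSq (a i) := by
    simp [Finset.mul_sum]
  set S := ∑ i, Complex.normSq (a i)
  have hc : Complex.normSq ((Real.sqrt PT / Real.sqrt S : ℝ) : ℂ) = PT / S := by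
    rw [Complex.normSq_ofReal, ← sq, div_pow, Real.sq_sqrt hPT.le, Real.sq_sqrt hS.le]
  have hdot (v : Fin N → ℂ) :
      Complex.normSq (star v ⬝ᵥ w) = PT / S * Complex.normSq (star v ⬝ᵥ a) := by
    rw [hwdef, dotProduct_smul, smul_eq_mul, Complex.normSq_mul, hc]
  have hval : Complex.normSq (star a ⬝ᵥ w) = PT * S := by
    rw [hdot, hself]
    field_simp
  refine ⟨⟨⟨?_, ?_⟩, fun w' hw' => ?_⟩, hval⟩
  · rw [hdot, div_mul_eq_mul_div, le_div_iff₀ hS]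
    linarith
  · rw [hwdef, hsum, hc, div_mul_cancel₀ _ hS.ne']
  · rw [hval, mul_comm PT]
    exact (hCS w').trans (mul_le_mul_of_nonneg_left hw'.2 hS.le)
end

section
/- Let θ ∈ ℝ with cos θ ≠ 0, let K, N_t, N_r be integers with 2 ≤ K < N_t < N_r, and set a = a_{N_t}(θ), ȧ = ȧ_{N_t}(θ), b = a_{N_r}(θ), ḃ = ȧ_{N_r}(θ), A = b aᴴ, and Ȧ = ḃ aᴴ + b ȧᴴ. Let h₁,…,h_K ∈ ℂ^{N_t} be nonzero and Γ₁,…,Γ_K, σ², P_T be positive reals. Suppose that the K×2 complex matrix whose k-th row is (h_kᴴ a, h_kᴴ ȧ) has rank 2, and suppose the SDR problem (with these data) attains its maximum. Then there exists a globally optimal solution (t, W₁,…,W_K) of the SDR problem in which rank(W_k) = 1 for every k = 1,…,K. -/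
/-!
Among all beamformers attaining the optimal value `t`, take one, `W`, maximizing the sum of the
left-hand sides of the SINR constraints; it exists because these beamformers form a compact set.
Every `W i` then has rank one. Indeed `h iᴴ W i h i > 0` by the SINR constraint, so if `W i` does
not have rank one it dominates some `x xᴴ` with `x ≠ 0` and `h iᴴ x = 0` (`exists_dominated`).

If `h jᴴ x ≠ 0` for some `j`, moving `x xᴴ` from user `i` to user `j` leaves `R = ∑ W k` unchanged
and strictly raises the SINR expression of user `j`, lowering no other: a contradiction.

Otherwise `x` is orthogonal to every `h k`, so by the rank condition `x` is not in the span of `a`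
and `ȧ`, and some `y` orthogonal to `a` and `ȧ` has `xᴴ y = -1` (`exists_direction`). Replace
`x xᴴ` by `(x + η y)(x + η y)ᴴ` for a small `η > 0`. As `A y = Ȧ y = 0`, the Schur matrix is
unchanged; the power drops by about `2 η`, while each SINR expression loses at most `O(η²)`, since
`h kᴴ x = 0`. Scaling all beamformers by `1 + η / P_T` keeps within the power budget, preserves the
Schur constraint since `t ≥ 0`, and raises each SINR expression, which is at least `Γ k σ² > 0`, by
order `η`. All SINR expressions have then increased: again a contradiction (`core`).
-/


open Matrix
open scoped ComplexOrder

/-- The centered ULA steering vector: entry `n` is `exp(i π (n - (N-1)/2) sin θ)`. -/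
noncomputable def ulaSteer (N : ℕ) (θ : ℝ) : Fin N → ℂ := fun n =>
  Complex.exp (Complex.I * (Real.pi : ℂ) * ((n : ℂ) - ((N : ℂ) - 1) / 2) * (Real.sin θ : ℂ))

/-- The derivative of the centered ULA steering vector: entry `n` is
`i π cos θ · (n - (N-1)/2) · exp(i π (n - (N-1)/2) sin θ)`. -/
noncomputable def ulaSteerDeriv (N : ℕ) (θ : ℝ) : Fin N → ℂ := fun n =>
  Complex.I * (Real.pi : ℂ) * (Real.cos θ : ℂ) * ((n : ℂ) - ((N : ℂ) - 1) / 2) *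
    ulaSteer N θ n

/-- The 2×2 Schur-complement matrix
`[[tr(ȦᴴȦR) − t, tr(ȦᴴAR)], [tr(AᴴȦR), tr(AᴴAR)]]`. -/
noncomputable def schurMat {Nr Nt : ℕ} (A Ad : Matrix (Fin Nr) (Fin Nt) ℂ)
    (R : Matrix (Fin Nt) (Fin Nt) ℂ) (t : ℝ) : Matrix (Fin 2) (Fin 2) ℂ :=
  !![trace (Adᴴ * Ad * R) - (t : ℂ), trace (Adᴴ * A * R);
     trace (Aᴴ * Ad * R), trace (Aᴴ * A * R)]

/-- Feasibility for the SDR problem: `W₁,…,W_K` PSD, the 2×2 Schur matrix (with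
`R = Σ_k W_k`) PSD, the SINR constraints
`(1+Γ_k)(h_kᴴW_kh_k) − Γ_k(h_kᴴRh_k) ≥ Γ_kσ²`, and the power constraint
`Σ_k tr(W_k) ≤ P_T`. -/
def SDRFeasible {K Nr Nt : ℕ} (A Ad : Matrix (Fin Nr) (Fin Nt) ℂ)
    (h : Fin K → Fin Nt → ℂ) (Γ : Fin K → ℝ) (σ2 PT : ℝ)
    (t : ℝ) (W : Fin K → Matrix (Fin Nt) (Fin Nt) ℂ) : Prop :=
  (∀ k, (W k).PosSemidef) ∧
  (schurMat A Ad (∑ k, W k) t).PosSemidef ∧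
  (∀ k, Γ k * σ2 ≤
    (1 + Γ k) * (star (h k) ⬝ᵥ (W k) *ᵥ h k).re
      - Γ k * (star (h k) ⬝ᵥ (∑ j, W j) *ᵥ h k).re) ∧
  (∑ k, trace (W k)).re ≤ PT

/-- Optimality for the SDR problem: feasible with maximal `t`. -/
def SDROptimal {K Nr Nt : ℕ} (A Ad : Matrix (Fin Nr) (Fin Nt) ℂ)
    (h : Fin K → Fin Nt → ℂ) (Γ : Fin K → ℝ) (σ2 PT : ℝ)
    (t : ℝ) (W : Fin K → Matrix (Fin Nt) (Fin Nt) ℂ) : Prop :=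
  SDRFeasible A Ad h Γ σ2 PT t W ∧
  ∀ (t' : ℝ) (W' : Fin K → Matrix (Fin Nt) (Fin Nt) ℂ),
    SDRFeasible A Ad h Γ σ2 PT t' W' → t' ≤ t

/-! ### Positive semidefinite matrices and rank-one pieces -/

/-- The real value of the Hermitian form of `M` at `v`. -/
noncomputable def qf {n : ℕ} (v : Fin n → ℂ) (M : Matrix (Fin n) (Fin n) ℂ) : ℝ :=
  (star v ⬝ᵥ M *ᵥ v).re

lemma qf_add {n : ℕ} (v : Fin n → ℂ) (M N : Matrix (Fin n) (Fin n) ℂ) :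
    qf v (M + N) = qf v M + qf v N := by
  simp [qf, add_mulVec]

lemma qf_sub {n : ℕ} (v : Fin n → ℂ) (M N : Matrix (Fin n) (Fin n) ℂ) :
    qf v (M - N) = qf v M - qf v N := by
  simp [qf, sub_mulVec]

lemma qf_smul {n : ℕ} (v : Fin n → ℂ) (c : ℝ) (M : Matrix (Fin n) (Fin n) ℂ) :
    qf v (c • M) = c * qf v M := by
  simp [qf, smul_mulVec]

lemma qf_vecMulVec {n : ℕ} (v x : Fin n → ℂ) :
    qf v (vecMulVec x (star x)) = Complex.normSq (star v ⬝ᵥ x) := by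
  have h1 : star x ⬝ᵥ v = star (star v ⬝ᵥ x) := by
    rw [← star_dotProduct_star, star_star, dotProduct_comm]
  rw [qf, vecMulVec_mulVec, h1, op_smul_eq_smul, dotProduct_smul, smul_eq_mul, mul_comm]
  simp [Complex.normSq_apply]

lemma qf_nonneg {n : ℕ} (v : Fin n → ℂ) {M : Matrix (Fin n) (Fin n) ℂ} (hM : M.PosSemidef) :
    0 ≤ qf v M :=
  (Complex.nonneg_iff.mp (hM.dotProduct_mulVec_nonneg v)).1

lemma qf_eq {n : ℕ} (v : Fin n → ℂ) {M : Matrix (Fin n) (Fin n) ℂ} (hM : M.PosSemidef) :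
    star v ⬝ᵥ M *ᵥ v = (qf v M : ℂ) := by
  apply Complex.ext
  · simp [qf]
  · simpa using (Complex.nonneg_iff.mp (hM.dotProduct_mulVec_nonneg v)).2.symm

/-- The Schur complement of a positive semidefinite matrix along a vector is positive
semidefinite, because it equals `Tᴴ E T` with `T = 1 - c⁻¹ v vᴴ E`, `c = vᴴ E v`. -/
lemma posSemidef_sub_vecMulVec {n : ℕ} {E : Matrix (Fin n) (Fin n) ℂ} (hE : E.PosSemidef)
    (v : Fin n → ℂ) (hv : 0 < qf v E) :
    (E - ((qf v E)⁻¹ : ℝ) • vecMulVec (E *ᵥ v) (star (E *ᵥ v))).PosSemidef := by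
  set c := qf v E with hc
  have hcc : (c : ℂ) ≠ 0 := by exact_mod_cast hv.ne'
  have h1 := hE.conjTranspose_mul_mul_same (1 - ((c : ℂ)⁻¹) • vecMulVec v (star v) * E)
  have hEH : Eᴴ = E := hE.1
  have h2 : star (E *ᵥ v) = star v ᵥ* E := by rw [star_mulVec, hEH]
  have h3 : vecMulVec v (star v) * E * vecMulVec v (star v)
      = (c : ℂ) • vecMulVec v (star v) := by
    rw [Matrix.mul_assoc, mul_vecMulVec, vecMulVec_mul_vecMulVec, qf_eq v hE, vecMulVec_smul]
  have h4 : vecMulVec (E *ᵥ v) (star (E *ᵥ v)) = E * vecMulVec v (star v) * E := by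
    rw [h2, mul_vecMulVec, vecMulVec_mul]
  convert h1 using 1
  have h5 : ((c⁻¹ : ℝ) • vecMulVec (E *ᵥ v) (star (E *ᵥ v)))
      = (c : ℂ)⁻¹ • (E * vecMulVec v (star v) * E) := by
    rw [h4]; ext i j; simp
  have h6 : (vecMulVec v (star v))ᴴ = vecMulVec v (star v) := by
    rw [conjTranspose_vecMulVec, star_star]
  rw [h5, conjTranspose_sub, conjTranspose_mul, conjTranspose_smul, hEH, h6]
  generalize vecMulVec v (star v) = V at *
  simp only [conjTranspose_one, star_inv₀, Complex.star_def, Complex.conj_ofReal, sub_mul, mul_sub,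
    Matrix.one_mul, Matrix.mul_one, smul_mul_assoc, mul_smul_comm, smul_sub]
  have h7 : E * V * E * (V * E) = (c : ℂ) • (E * V * E) := by
    calc E * V * E * (V * E) = E * (V * E * V) * E := by simp only [Matrix.mul_assoc]
      _ = _ := by rw [h3]; simp
  have h8 : E * (V * E) = E * V * E := by rw [Matrix.mul_assoc]
  rw [h7, h8, smul_smul, smul_smul]
  rw [inv_mul_cancel_right₀ hcc]
  simp

lemma isHermitian_dot {n : ℕ} {E : Matrix (Fin n) (Fin n) ℂ} (hE : E.IsHermitian)
    (u v : Fin n → ℂ) : star u ⬝ᵥ E *ᵥ v = star (E *ᵥ u) ⬝ᵥ v := by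
  rw [star_mulVec, dotProduct_mulVec, hE.eq]

lemma exists_qf_pos {n : ℕ} {E : Matrix (Fin n) (Fin n) ℂ} (hE : E.PosSemidef) (h0 : E ≠ 0) :
    ∃ v, 0 < qf v E := by
  by_contra! hc
  apply h0
  apply Matrix.ext_of_mulVec_single
  intro i
  rw [zero_mulVec, ← hE.dotProduct_mulVec_zero_iff, qf_eq _ hE,
    le_antisymm (hc _) (qf_nonneg _ hE)]
  simp

/-- A positive semidefinite matrix that is not of rank one dominates some `x xᴴ` with `x ≠ 0`
orthogonal to a prescribed vector `v` outside its null cone. -/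
lemma exists_dominated {n : ℕ} {W : Matrix (Fin n) (Fin n) ℂ} (hW : W.PosSemidef)
    (v : Fin n → ℂ) (hv : 0 < qf v W) (hr : W.rank ≠ 1) :
    ∃ x : Fin n → ℂ, x ≠ 0 ∧ star v ⬝ᵥ x = 0 ∧ (W - vecMulVec x (star x)).PosSemidef := by
  set c := qf v W with hc
  have hE := posSemidef_sub_vecMulVec hW v hv
  rw [← hc] at hE
  set E := W - (c⁻¹ : ℝ) • vecMulVec (W *ᵥ v) (star (W *ᵥ v)) with hEd
  have hcc : (c : ℂ) ≠ 0 := by exact_mod_cast hv.ne'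
  have hEv : E *ᵥ v = 0 := by
    have h1 : star (W *ᵥ v) ⬝ᵥ v = c := by rw [← isHermitian_dot hW.1, qf_eq v hW]
    rw [hEd, sub_mulVec, smul_mulVec, vecMulVec_mulVec, h1]
    ext i
    simp
    field_simp
    simp
  have hE0 : E ≠ 0 := by
    intro h0
    apply hr
    have hW' : W = vecMulVec ((c⁻¹ : ℝ) • (W *ᵥ v)) (star (W *ᵥ v)) := by
      rw [smul_vecMulVec]
      exact sub_eq_zero.mp h0
    apply le_antisymm
    · rw [hW']; exact rank_vecMulVec_le _ _
    · rw [Nat.one_le_iff_ne_zero]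
      intro h1
      have : W = 0 := by
        rw [Matrix.rank, Submodule.finrank_eq_zero, LinearMap.range_eq_bot] at h1
        apply Matrix.ext_of_mulVec_single
        intro i
        have h2 := LinearMap.congr_fun h1 (Pi.single i 1)
        rw [mulVecLin_apply] at h2
        rw [h2, zero_mulVec, LinearMap.zero_apply]
      rw [hc, this] at hv
      simp [qf] at hv
  obtain ⟨u, hu⟩ := exists_qf_pos hE hE0
  have hF := posSemidef_sub_vecMulVec hE u hu
  set d := qf u E
  have hs : Real.sqrt d⁻¹ * Real.sqrt d⁻¹ = d⁻¹ := Real.mul_self_sqrt (by positivity)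
  have hsx : vecMulVec ((Real.sqrt d⁻¹) • (E *ᵥ u)) (star ((Real.sqrt d⁻¹) • (E *ᵥ u)))
      = d⁻¹ • vecMulVec (E *ᵥ u) (star (E *ᵥ u)) := by
    rw [star_smul, smul_vecMulVec, vecMulVec_smul, smul_smul, star_trivial, hs]
  refine ⟨(Real.sqrt d⁻¹) • (E *ᵥ u), ?_, ?_, ?_⟩
  · intro h0
    rw [smul_eq_zero] at h0
    rcases h0 with h0 | h0
    · rw [h0] at hs
      have : 0 < d⁻¹ := by positivity
      linarith
    · have : d = 0 := by simp [d, qf, h0]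
      linarith
  · rw [dotProduct_smul, isHermitian_dot hE.1, hEv]
    simp
  · rw [hsx]
    have : W - d⁻¹ • vecMulVec (E *ᵥ u) (star (E *ᵥ u))
        = (E - d⁻¹ • vecMulVec (E *ᵥ u) (star (E *ᵥ u)))
          + (c⁻¹ : ℝ) • vecMulVec (W *ᵥ v) (star (W *ᵥ v)) := by
      rw [hEd]; abel
    rw [this]
    refine hF.add ((posSemidef_vecMulVec_self_star _).smul ?_)
    positivity

/-! ### The Schur matrix -/

lemma trace_mul_vecMulVec {m n : ℕ} (X Y : Matrix (Fin m) (Fin n) ℂ) (x : Fin n → ℂ) :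
    trace (Xᴴ * Y * vecMulVec x (star x)) = star (X *ᵥ x) ⬝ᵥ (Y *ᵥ x) := by
  rw [mul_vecMulVec, trace_vecMulVec, dotProduct_comm, ← mulVec_mulVec, star_mulVec,
    dotProduct_mulVec]

/-- The Schur matrix only sees `A x` and `Ȧ x` for a rank-one change `x xᴴ` of `R`. -/
lemma schurMat_exchange {m n : ℕ} (A Ad : Matrix (Fin m) (Fin n) ℂ)
    (R : Matrix (Fin n) (Fin n) ℂ) (t : ℝ) (x y : Fin n → ℂ) (hA : A *ᵥ x = A *ᵥ y)
    (hAd : Ad *ᵥ x = Ad *ᵥ y) :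
    schurMat A Ad (R - vecMulVec x (star x) + vecMulVec y (star y)) t = schurMat A Ad R t := by
  simp only [schurMat, mul_add, mul_sub, trace_add, trace_sub, trace_mul_vecMulVec, hA, hAd,
    sub_add_cancel]

/-- At `t = 0` the Schur matrix is a Gram matrix, so its form at `x` is `tr (C R Cᴴ)` with
`C = x₀ Ȧ + x₁ A`. -/
lemma schurMat_zero_posSemidef {m n : ℕ} (A Ad : Matrix (Fin m) (Fin n) ℂ)
    {R : Matrix (Fin n) (Fin n) ℂ} (hR : R.PosSemidef) : (schurMat A Ad R 0).PosSemidef := by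
  have key : ∀ X Y : Matrix (Fin m) (Fin n) ℂ,
      star (trace (Xᴴ * Y * R)) = trace (Yᴴ * X * R) := by
    intro X Y
    rw [← trace_conjTranspose, conjTranspose_mul, conjTranspose_mul, conjTranspose_conjTranspose,
      hR.1.eq, trace_mul_comm]
  refine .of_dotProduct_mulVec_nonneg ?_ fun x => ?_
  · ext i j
    rw [conjTranspose_apply]
    fin_cases i <;> fin_cases j <;> simpa [schurMat] using key _ _
  · have := (hR.mul_mul_conjTranspose_same (x 0 • Ad + x 1 • A)).trace_nonneg
    rw [trace_mul_comm, ← Matrix.mul_assoc] at this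
    convert this using 1
    simp [schurMat, Matrix.mul_add, Matrix.add_mul, trace_add, dotProduct, Fin.sum_univ_two, mulVec]
    ring

lemma schurMat_smul_posSemidef {m n : ℕ} (A Ad : Matrix (Fin m) (Fin n) ℂ)
    {R : Matrix (Fin n) (Fin n) ℂ} {t s : ℝ} (hs : 0 ≤ s) (ht : 0 ≤ t)
    (h : (schurMat A Ad R t).PosSemidef) :
    (schurMat A Ad ((1 + s) • R) t).PosSemidef := by
  have h0 : (!![(t : ℂ), 0; 0, 0] : Matrix (Fin 2) (Fin 2) ℂ).PosSemidef := by
    have : (!![(t : ℂ), 0; 0, 0] : Matrix (Fin 2) (Fin 2) ℂ) = diagonal ![(t : ℂ), 0] := by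
      ext i j; fin_cases i <;> fin_cases j <;> simp
    rw [this, posSemidef_diagonal_iff]
    intro i; fin_cases i <;> simp [ht]
  have h1 := (h.smul (α := ℝ) (by positivity : 0 ≤ 1 + s)).add (h0.smul (α := ℝ) hs)
  convert h1 using 1
  ext i j
  fin_cases i <;> fin_cases j <;> simp [schurMat]
  ring

/-! ### Compactness of the feasible set -/

open scoped MatrixOrder Matrix.Norms.L2Operator in
lemma norm_entry_le_trace {n : ℕ} {M : Matrix (Fin n) (Fin n) ℂ} (hM : M.PosSemidef)
    (i j : Fin n) : ‖M i j‖ ≤ (trace M).re := by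
  obtain ⟨B, rfl⟩ := CStarAlgebra.nonneg_iff_eq_star_mul_self.mp hM.nonneg
  rw [star_eq_conjTranspose] at *
  have hd : ∀ i, ((Bᴴ * B) i i).re = ∑ k, ‖B k i‖ ^ 2 := by
    intro i
    simp [mul_apply, Complex.sq_norm, Complex.normSq_apply]
  have hd0 : ∀ i, 0 ≤ ((Bᴴ * B) i i).re := fun i => by rw [hd]; positivity
  have hle : ∀ i, ((Bᴴ * B) i i).re ≤ (trace (Bᴴ * B)).re := by
    intro i
    rw [trace, Complex.re_sum]
    exact Finset.single_le_sum (f := fun i => ((Bᴴ * B) i i).re) (fun i _ => hd0 i)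
      (Finset.mem_univ i)
  have h1 : ‖(Bᴴ * B) i j‖ ≤ (((Bᴴ * B) i i).re + ((Bᴴ * B) j j).re) / 2 := by
    rw [hd, hd, ← Finset.sum_add_distrib, Finset.sum_div, mul_apply]
    refine (norm_sum_le _ _).trans (Finset.sum_le_sum fun k _ => ?_)
    rw [norm_mul, conjTranspose_apply, norm_star]
    nlinarith [sq_nonneg (‖B k i‖ - ‖B k j‖)]
  linarith [hle i, hle j]

lemma isClosed_posSemidef_set (n : ℕ) :
    IsClosed {M : Matrix (Fin n) (Fin n) ℂ | M.PosSemidef} := by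
  simp only [posSemidef_iff_dotProduct_mulVec, Set.ofPred_and, Set.ofPred_forall]
  refine IsClosed.inter ?_ (isClosed_iInter fun x => ?_)
  · exact isClosed_eq (by fun_prop) continuous_id
  · simp only [Complex.nonneg_iff, Set.ofPred_and]
    exact (isClosed_le (by fun_prop) (by fun_prop)).inter (isClosed_eq (by fun_prop) (by fun_prop))

/-- The feasible beamformers for a fixed objective value form a compact set: closedness is clear,
and the entries of each `W k` are bounded by the power budget. -/
lemma isCompact_feasible {K Nr Nt : ℕ} (A Ad : Matrix (Fin Nr) (Fin Nt) ℂ)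
    (h : Fin K → Fin Nt → ℂ) (Γ : Fin K → ℝ) (σ2 PT t : ℝ) :
    IsCompact {W | SDRFeasible A Ad h Γ σ2 PT t W} := by
  have hcpt : IsCompact {W : Fin K → Matrix (Fin Nt) (Fin Nt) ℂ |
      ∀ k, W k ∈ {M : Matrix (Fin Nt) (Fin Nt) ℂ |
        ∀ i, M i ∈ {r : Fin Nt → ℂ | ∀ j, r j ∈ Metric.closedBall (0 : ℂ) PT}}} := by
    refine isCompact_pi_infinite fun k => ?_
    refine isCompact_pi_infinite (X := fun _ : Fin Nt => Fin Nt → ℂ) fun i => ?_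
    exact isCompact_pi_infinite fun j => isCompact_closedBall _ _
  refine hcpt.of_isClosed_subset ?_ ?_
  · simp only [SDRFeasible, Set.ofPred_and, Set.ofPred_forall]
    refine IsClosed.inter (isClosed_iInter fun k => ?_) (IsClosed.inter ?_ (IsClosed.inter
      (isClosed_iInter fun k => ?_) ?_))
    · refine (isClosed_posSemidef_set Nt).preimage ?_
      exact continuous_apply k
    · refine (isClosed_posSemidef_set 2).preimage ?_
      refine continuous_matrix fun i j => ?_
      fin_cases i <;> fin_cases j <;> simp [schurMat] <;> fun_prop
    · exact isClosed_le (by fun_prop) (by fun_prop)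
    · exact isClosed_le (by fun_prop) (by fun_prop)
  · rintro W ⟨hW, -, -, hP⟩ k i j
    rw [mem_closedBall_zero_iff]
    refine (norm_entry_le_trace (hW k) i j).trans (le_trans ?_ hP)
    rw [Complex.re_sum]
    exact Finset.single_le_sum (f := fun k => (trace (W k)).re)
      (fun k _ => (Complex.nonneg_iff.mp (hW k).trace_nonneg).1) (Finset.mem_univ k)

/-! ### Exchanging rank-one pieces between users -/

/-- The beamformers obtained from `W` by removing `x xᴴ` from user `i` and giving `z zᴴ` to
user `j`. -/
noncomputable def exch {K n : ℕ} (W : Fin K → Matrix (Fin n) (Fin n) ℂ) (i j : Fin K)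
    (x z : Fin n → ℂ) : Fin K → Matrix (Fin n) (Fin n) ℂ := fun k =>
  W k - (if k = i then vecMulVec x (star x) else 0) + (if k = j then vecMulVec z (star z) else 0)

lemma exch_sum {K n : ℕ} (W : Fin K → Matrix (Fin n) (Fin n) ℂ) (i j : Fin K)
    (x z : Fin n → ℂ) :
    ∑ k, exch W i j x z k = ∑ k, W k - vecMulVec x (star x) + vecMulVec z (star z) := by
  simp [exch, Finset.sum_add_distrib, Finset.sum_sub_distrib]

lemma exch_posSemidef {K n : ℕ} {W : Fin K → Matrix (Fin n) (Fin n) ℂ} (i j : Fin K)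
    (x z : Fin n → ℂ) (hW : ∀ k, (W k).PosSemidef)
    (hi : (W i - vecMulVec x (star x)).PosSemidef) (k : Fin K) :
    (exch W i j x z k).PosSemidef := by
  refine PosSemidef.add ?_ ?_
  · split_ifs with hk
    · rw [hk]; exact hi
    · simpa using hW k
  · split_ifs
    · exact posSemidef_vecMulVec_self_star _
    · exact PosSemidef.zero

lemma qf_exch {K n : ℕ} (v : Fin n → ℂ) (W : Fin K → Matrix (Fin n) (Fin n) ℂ) (i j : Fin K)
    (x z : Fin n → ℂ) (k : Fin K) :
    qf v (exch W i j x z k) = qf v (W k) - (if k = i then Complex.normSq (star v ⬝ᵥ x) else 0)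
      + (if k = j then Complex.normSq (star v ⬝ᵥ z) else 0) := by
  have h0 : qf v 0 = 0 := by simp [qf]
  rw [exch, qf_add, qf_sub]
  congr 1
  · split_ifs <;> simp [qf_vecMulVec, h0]
  · split_ifs <;> simp [qf_vecMulVec, h0]

/-- The left-hand side of the SINR constraint of user `k`. -/
noncomputable def sinr {K n : ℕ} (h : Fin K → Fin n → ℂ) (Γ : Fin K → ℝ)
    (W : Fin K → Matrix (Fin n) (Fin n) ℂ) (k : Fin K) : ℝ :=
  (1 + Γ k) * qf (h k) (W k) - Γ k * qf (h k) (∑ j, W j)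

/-! ### Rank reduction -/

/-- Rank reduction for arbitrary `A`, `Ȧ`: all that is needed is that a nonzero vector orthogonal
to every `h k` can be shortened, to first order, along a direction that `A` and `Ȧ` do not see. -/
theorem core {K Nr Nt : ℕ} (A Ad : Matrix (Fin Nr) (Fin Nt) ℂ)
    (h : Fin K → Fin Nt → ℂ) (Γ : Fin K → ℝ) (hΓ : ∀ k, 0 < Γ k) (σ2 PT : ℝ)
    (hσ : 0 < σ2) (hPT : 0 < PT)
    (hex : ∀ x : Fin Nt → ℂ, x ≠ 0 → (∀ k, star (h k) ⬝ᵥ x = 0) →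
      ∃ y, star x ⬝ᵥ y = -1 ∧ A *ᵥ y = 0 ∧ Ad *ᵥ y = 0)
    (hattain : ∃ (t : ℝ) (W : Fin K → Matrix (Fin Nt) (Fin Nt) ℂ),
      SDROptimal A Ad h Γ σ2 PT t W) :
    ∃ (t : ℝ) (W : Fin K → Matrix (Fin Nt) (Fin Nt) ℂ),
      SDROptimal A Ad h Γ σ2 PT t W ∧ ∀ k, (W k).rank = 1 := by
  obtain ⟨t, W₀, hW₀, hopt⟩ := hattain
  obtain ⟨W, hWf, hmax⟩ := (isCompact_feasible A Ad h Γ σ2 PT t).exists_isMaxOn ⟨W₀, hW₀⟩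
    (f := fun W => ∑ k, sinr h Γ W k) (by unfold sinr qf; fun_prop)
  refine ⟨t, W, ⟨hWf, hopt⟩, fun i => ?_⟩
  by_contra hr
  obtain ⟨hW, hS, hq, hP⟩ := hWf
  replace hq : ∀ k, Γ k * σ2 ≤ sinr h Γ W k := hq
  have hR : (∑ k, W k).PosSemidef := posSemidef_sum _ fun k _ => hW k
  -- The same beamformers are feasible with objective value `0`.
  have ht : 0 ≤ t := hopt 0 W ⟨hW, schurMat_zero_posSemidef A Ad hR, hq, hP⟩
  have hpos : 0 < qf (h i) (W i) := by
    have h1 := hq i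
    have h2 := mul_pos (hΓ i) hσ
    have h3 := mul_nonneg (hΓ i).le (qf_nonneg (h i) hR)
    have h4 := hΓ i
    rw [sinr] at h1
    by_contra! h5
    nlinarith
  obtain ⟨x, hx0, hxi, hxW⟩ := exists_dominated (hW i) (h i) hpos hr
  by_cases hj : ∃ j, star (h j) ⬝ᵥ x ≠ 0
  · -- Handing `x xᴴ` over to user `j` keeps `R` and helps user `j`, at no cost to the others.
    obtain ⟨j, hj⟩ := hj
    have hsum : ∑ k, exch W i j x x k = ∑ k, W k := by rw [exch_sum]; abel
    have hsin : ∀ k, sinr h Γ (exch W i j x x) k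
        = sinr h Γ W k + (1 + Γ k) * (if k = j then Complex.normSq (star (h k) ⬝ᵥ x) else 0) := by
      intro k
      have h1 : (if k = i then Complex.normSq (star (h k) ⬝ᵥ x) else 0) = 0 := by
        split_ifs with hk
        · rw [hk, hxi, map_zero]
        · rfl
      rw [sinr, hsum, qf_exch, h1, sinr]
      ring
    have hge : ∀ k, sinr h Γ W k ≤ sinr h Γ (exch W i j x x) k := by
      intro k
      rw [hsin]
      have h1 : (0 : ℝ) ≤ if k = j then Complex.normSq (star (h k) ⬝ᵥ x) else 0 := by
        split_ifs
        · exact Complex.normSq_nonneg _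
        · exact le_rfl
      have := mul_nonneg (by linarith [hΓ k] : 0 ≤ 1 + Γ k) h1
      linarith
    have hmem : SDRFeasible A Ad h Γ σ2 PT t (exch W i j x x) := by
      refine ⟨exch_posSemidef i j x x hW hxW, by rwa [hsum], fun k => (hq k).trans (hge k), ?_⟩
      rwa [← trace_sum, hsum, trace_sum]
    have hlt : ∑ k, sinr h Γ W k < ∑ k, sinr h Γ (exch W i j x x) k := by
      refine Finset.sum_lt_sum (fun k _ => hge k) ⟨j, Finset.mem_univ j, ?_⟩
      rw [hsin, if_pos rfl]
      have := mul_pos (by linarith [hΓ j] : 0 < 1 + Γ j) (Complex.normSq_pos.mpr hj)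
      linarith
    exact absurd (hmax hmem) (not_le.mpr hlt)
  · -- Replacing `x` by `x + η y` saves power of order `η` and costs each SINR only `O(η²)`;
    -- scaling everything up spends the saved power.
    push Not at hj
    obtain ⟨y, hxy, hAy, hAdy⟩ := hex x hx0 hj
    obtain ⟨N, hN0, hN⟩ : ∃ N : ℝ, 0 ≤ N ∧ (star y ⬝ᵥ y) = (N : ℂ) := by
      have h1 := Complex.nonneg_iff.mp (dotProduct_star_self_nonneg y)
      exact ⟨_, h1.1, Complex.ext (by simp) (by simpa using h1.2.symm)⟩
    set m : Fin K → ℝ := fun k => Complex.normSq (star (h k) ⬝ᵥ y) with hm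
    have hm0 : ∀ k, 0 ≤ m k := fun k => Complex.normSq_nonneg _
    obtain ⟨M, hM0, hM⟩ : ∃ M : ℝ, 0 ≤ M ∧ ∀ k, m k ≤ M :=
      ⟨∑ k, m k, Finset.sum_nonneg fun k _ => hm0 k,
        fun k => Finset.single_le_sum (fun k _ => hm0 k) (Finset.mem_univ k)⟩
    obtain ⟨η, hη0, hηP, hηN, hηM⟩ :
        ∃ η : ℝ, 0 < η ∧ η ≤ PT ∧ η * N ≤ 1 ∧ 2 * η * M * PT < σ2 := by
      refine ⟨min PT (min (1 / (N + 1)) (σ2 / (2 * (M + 1) * PT))), by positivity,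
        min_le_left _ _, ?_, ?_⟩
      · have h1 : min PT (min (1 / (N + 1)) (σ2 / (2 * (M + 1) * PT))) ≤ 1 / (N + 1) :=
          (min_le_right _ _).trans (min_le_left _ _)
        have h2 := mul_le_mul_of_nonneg_right h1 hN0
        have h3 : 1 / (N + 1) * N ≤ 1 := by
          rw [div_mul_eq_mul_div, div_le_one (by positivity)]; linarith
        linarith
      · set e := min PT (min (1 / (N + 1)) (σ2 / (2 * (M + 1) * PT)))
        have h1 : e ≤ σ2 / (2 * (M + 1) * PT) := (min_le_right _ _).trans (min_le_right _ _)
        rw [le_div_iff₀ (by positivity)] at h1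
        have he : 0 < e := by positivity
        nlinarith [mul_pos he hPT]
    set z : Fin Nt → ℂ := x + (η : ℂ) • y with hz
    set V := exch W i i x z with hV
    set s := η / PT with hs
    have hs0 : 0 < s := by positivity
    have hs1 : s ≤ 1 := by rw [hs, div_le_one hPT]; exact hηP
    have hsP : s * PT = η := by rw [hs]; field_simp
    have hsum : ∑ k, ((1 + s) • V) k = (1 + s) • ∑ k, V k := by
      simp [Finset.smul_sum]
    have hzk : ∀ k, Complex.normSq (star (h k) ⬝ᵥ z) = η ^ 2 * m k := by
      intro k
      rw [hz, dotProduct_add, hj k, zero_add, dotProduct_smul, smul_eq_mul, map_mul,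
        Complex.normSq_ofReal]
      ring
    have hVs : ∀ k, sinr h Γ W k - Γ k * (η ^ 2 * m k) ≤ sinr h Γ V k := by
      intro k
      rw [sinr, sinr, hV, exch_sum, qf_exch, qf_add, qf_sub, qf_vecMulVec, qf_vecMulVec, hj k, hzk]
      have h1 : (0 : ℝ) ≤ if k = i then η ^ 2 * m k else 0 := by
        split_ifs
        · have := hm0 k
          positivity
        · exact le_rfl
      have := mul_nonneg (by linarith [hΓ k] : 0 ≤ 1 + Γ k) h1
      simp only [map_zero, ite_self, sub_zero]
      linarith
    have hscale : ∀ k, sinr h Γ ((1 + s) • V) k = (1 + s) * sinr h Γ V k := by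
      intro k
      rw [sinr, hsum, Pi.smul_apply, qf_smul, qf_smul, sinr]
      ring
    have hgt : ∀ k, sinr h Γ W k < sinr h Γ ((1 + s) • V) k := by
      intro k
      rw [hscale]
      have h1 := hVs k
      have h2 := hq k
      have h3 : η * m k * (1 + s) * PT < σ2 := by
        have : η * m k * (1 + s) * PT ≤ η * M * 2 * PT := by
          have := hM k
          have := hm0 k
          gcongr
          linarith
        linarith
      have h4 : (1 + s) * (η ^ 2 * m k) < s * σ2 := by
        have h5 := mul_lt_mul_of_pos_left h3 hs0
        calc (1 + s) * (η ^ 2 * m k) = s * PT * (η * m k * (1 + s)) := by rw [hsP]; ring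
          _ = s * (η * m k * (1 + s) * PT) := by ring
          _ < _ := h5
      have h6 := mul_lt_mul_of_pos_left h4 (hΓ k)
      have h7 := mul_le_mul_of_nonneg_left h1 (by linarith : 0 ≤ 1 + s)
      have h8 := mul_le_mul_of_nonneg_left h2 hs0.le
      nlinarith
    have htr : (∑ k, trace (((1 + s) • V) k)).re ≤ PT := by
      have hyx : star y ⬝ᵥ x = -1 := by
        have := congrArg star hxy
        rwa [← star_dotProduct_star, star_star, dotProduct_comm, star_neg, star_one,
          dotProduct_comm] at this
      have h1 : (trace (vecMulVec z (star z))).re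
          = (trace (vecMulVec x (star x))).re - 2 * η + η ^ 2 * N := by
        rw [trace_vecMulVec, trace_vecMulVec, dotProduct_comm, dotProduct_comm x, hz, star_add,
          star_smul, add_dotProduct, dotProduct_add, dotProduct_add, smul_dotProduct,
          smul_dotProduct, dotProduct_smul, dotProduct_smul, hxy, hyx, hN]
        simp
        ring
      rw [← trace_sum, hsum, trace_smul, hV, exch_sum, trace_add, trace_sub]
      rw [← trace_sum] at hP
      rw [Complex.smul_re, Complex.add_re, Complex.sub_re, h1, smul_eq_mul]
      have h2 : η ^ 2 * N ≤ η := by nlinarith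
      calc (1 + s) * ((trace (∑ k, W k)).re - (trace (vecMulVec x (star x))).re
            + ((trace (vecMulVec x (star x))).re - 2 * η + η ^ 2 * N))
          ≤ (1 + s) * (PT - η) := by gcongr; linarith
        _ = PT - s * η + (s * PT - η) := by ring
        _ ≤ PT := by rw [hsP]; nlinarith
    have hAz : A *ᵥ x = A *ᵥ z := by rw [hz, mulVec_add, mulVec_smul, hAy]; simp
    have hAdz : Ad *ᵥ x = Ad *ᵥ z := by rw [hz, mulVec_add, mulVec_smul, hAdy]; simp
    have hmem : SDRFeasible A Ad h Γ σ2 PT t ((1 + s) • V) := by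
      refine ⟨fun k => (exch_posSemidef i i x z hW hxW k).smul (α := ℝ)
        (by positivity : 0 ≤ 1 + s), ?_,
        fun k => (hq k).trans (hgt k).le, htr⟩
      rw [hsum]
      refine schurMat_smul_posSemidef A Ad hs0.le ht ?_
      rw [hV, exch_sum, schurMat_exchange A Ad _ t x z hAz hAdz]
      exact hS
    have hlt : ∑ k, sinr h Γ W k < ∑ k, sinr h Γ ((1 + s) • V) k :=
      Finset.sum_lt_sum (fun k _ => (hgt k).le) ⟨i, Finset.mem_univ i, hgt i⟩
    exact absurd (hmax hmem) (not_le.mpr hlt)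

/-! ### Consequences of the rank condition -/

/-- A vector outside the span of `a` and `d` is not orthogonal to everything that `a` and `d` are
orthogonal to: otherwise the functional `xᴴ` would be a combination of `aᴴ` and `dᴴ`. -/
lemma exists_direction {n : ℕ} (a d x : Fin n → ℂ)
    (hx : ∀ c e : ℂ, x ≠ c • a + e • d) :
    ∃ y, star x ⬝ᵥ y = -1 ∧ star a ⬝ᵥ y = 0 ∧ star d ⬝ᵥ y = 0 := by
  by_contra! hne
  -- The functional `vᴴ`; conjugate-linear in `v`, hence a bare function.
  let F : (Fin n → ℂ) → Module.Dual ℂ (Fin n → ℂ) := fun v =>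
    dotProductBilin ℂ ℂ (star v)
  have hF : ∀ v w, F v w = star v ⬝ᵥ w := fun v w => rfl
  have hmem : F x ∈ Submodule.span ℂ (Set.range ![F a, F d]) := by
    refine mem_span_of_iInf_ker_le_ker fun w hw => ?_
    simp only [Submodule.mem_iInf, LinearMap.mem_ker, Fin.forall_fin_two] at hw
    have hwa : star a ⬝ᵥ w = 0 := hw.1
    have hwd : star d ⬝ᵥ w = 0 := hw.2
    rw [LinearMap.mem_ker, hF]
    by_contra hxw
    refine hne ((-(star x ⬝ᵥ w)⁻¹) • w) ?_ ?_ ?_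
    · rw [dotProduct_smul, smul_eq_mul, neg_mul, inv_mul_cancel₀ hxw]
    · rw [dotProduct_smul, hwa, smul_zero]
    · rw [dotProduct_smul, hwd, smul_zero]
  rw [Submodule.mem_span_range_iff_exists_fun] at hmem
  obtain ⟨c, hc⟩ := hmem
  rw [Fin.sum_univ_two] at hc
  refine hx (star (c 0)) (star (c 1)) ?_
  ext i
  have h1 := LinearMap.congr_fun hc (Pi.single i (1 : ℂ))
  have h2 : c 0 * star (a i) + c 1 * star (d i) = star (x i) := by
    simpa [F] using h1
  have h3 := congrArg star h2
  simpa [mul_comm] using h3.symm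

lemma eq_zero_of_mulVec_eq_zero {K : ℕ} (D : Matrix (Fin K) (Fin 2) ℂ) (hD : D.rank = 2)
    (c : Fin 2 → ℂ) (hc : D *ᵥ c = 0) : c = 0 := by
  have h1 := D.mulVecLin.finrank_range_add_finrank_ker
  rw [Matrix.rank] at hD
  rw [hD, Module.finrank_fin_fun] at h1
  have h2 : LinearMap.ker D.mulVecLin = ⊥ := by
    rw [← Submodule.finrank_eq_zero (R := ℂ)]
    omega
  exact (LinearMap.ker_eq_bot'.mp h2) c hc

/-- If `H Ā = [h_kᴴa, h_kᴴȧ]_k` has full column rank (rank 2) and the SDR problem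
attains its maximum, then there is a globally optimal solution in which every `W_k`
has rank one. -/
theorem stmt7 (θ : ℝ) (hθ : Real.cos θ ≠ 0) (K Nt Nr : ℕ)
    (hK : 2 ≤ K) (hKNt : K < Nt) (hNtNr : Nt < Nr)
    (a ad : Fin Nt → ℂ) (b bd : Fin Nr → ℂ)
    (hadef : a = ulaSteer Nt θ) (haddef : ad = ulaSteerDeriv Nt θ)
    (hbdef : b = ulaSteer Nr θ) (hbddef : bd = ulaSteerDeriv Nr θ)
    (A Ad : Matrix (Fin Nr) (Fin Nt) ℂ)
    (hA : A = vecMulVec b (star a))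
    (hAd : Ad = vecMulVec bd (star a) + vecMulVec b (star ad))
    (h : Fin K → Fin Nt → ℂ) (hhk : ∀ k, h k ≠ 0)
    (Γ : Fin K → ℝ) (hΓ : ∀ k, 0 < Γ k) (σ2 PT : ℝ) (hσ : 0 < σ2) (hPT : 0 < PT)
    (D : Matrix (Fin K) (Fin 2) ℂ)
    (hD : D = Matrix.of fun k j => ![star (h k) ⬝ᵥ a, star (h k) ⬝ᵥ ad] j)
    (hrank : D.rank = 2)
    (hattain : ∃ (t : ℝ) (W : Fin K → Matrix (Fin Nt) (Fin Nt) ℂ),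
      SDROptimal A Ad h Γ σ2 PT t W) :
    ∃ (t : ℝ) (W : Fin K → Matrix (Fin Nt) (Fin Nt) ℂ),
      SDROptimal A Ad h Γ σ2 PT t W ∧ ∀ k, (W k).rank = 1 := by
  refine core A Ad h Γ hΓ σ2 PT hσ hPT (fun x hx0 hx => ?_) hattain
  -- A combination of `a` and `ad` orthogonal to every `h k` vanishes, by the rank condition.
  have hspan : ∀ c e : ℂ, x ≠ c • a + e • ad := by
    intro c e hce
    have h1 : D *ᵥ ![c, e] = 0 := by
      ext k
      have h2 := hx k
      rw [hce, dotProduct_add, dotProduct_smul, dotProduct_smul] at h2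
      rw [hD]
      simpa [mulVec, dotProduct, Fin.sum_univ_two, mul_comm] using h2
    have h2 := eq_zero_of_mulVec_eq_zero D hrank _ h1
    have hc : c = 0 := congrFun h2 0
    have he : e = 0 := congrFun h2 1
    exact hx0 (by rw [hce, hc, he]; simp)
  obtain ⟨y, hxy, hay, hady⟩ := exists_direction a ad x hspan
  refine ⟨y, hxy, ?_, ?_⟩
  · rw [hA, vecMulVec_mulVec, hay]; simp
  · rw [hAd, add_mulVec, vecMulVec_mulVec, vecMulVec_mulVec, hay, hady]; simp
end

section
/- Let B ∈ ℂ^{n×n} be Hermitian positive definite, h ∈ ℂⁿ nonzero, c > 0, and suppose Z := B − c·h hᴴ is positive semidefinite. If W ∈ ℂ^{n×n} is a nonzero Hermitian positive semidefinite matrix with tr(Z W) = 0, then Z is singular with rank(Z) = n − 1, and rank(W) = 1. -/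
/-!
For positive semidefinite `Z = XᴴX` and `W = YᴴY`, the number `tr (Z W)` is the squared Frobenius
norm of `X Yᴴ`, so `tr (Z W) = 0` forces `Z W = 0`. Sylvester's inequality then gives
`rank Z + rank W ≤ n`. Since `B` is invertible and differs from `Z` by a matrix of rank at most
one, `rank Z ≥ n - 1`; and `W ≠ 0` gives `rank W ≥ 1`. These three inequalities determine both
ranks, and `Z` is singular because it kills the nonzero matrix `W`.
-/

open Matrix
open scoped ComplexOrder

/-- `tr (Z W)` is the squared Frobenius norm of `X Yᴴ` when `Z = XᴴX` and `W = YᴴY`. -/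
lemma mul_eq_zero_of_trace_mul_eq_zero {m : Type*} [Fintype m] {Z W : Matrix m m ℂ}
    (hZ : Z.PosSemidef) (hW : W.PosSemidef) (htr : trace (Z * W) = 0) : Z * W = 0 := by
  classical
  open scoped MatrixOrder Matrix.Norms.L2Operator in
  obtain ⟨X, rfl⟩ := CStarAlgebra.nonneg_iff_eq_star_mul_self.mp hZ.nonneg
  open scoped MatrixOrder Matrix.Norms.L2Operator in
  obtain ⟨Y, rfl⟩ := CStarAlgebra.nonneg_iff_eq_star_mul_self.mp hW.nonneg
  simp only [star_eq_conjTranspose] at htr ⊢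
  have hXY : X * Yᴴ = 0 := by
    rw [← trace_mul_conjTranspose_self_eq_zero_iff, ← htr, conjTranspose_mul,
      conjTranspose_conjTranspose, ← Matrix.mul_assoc, Matrix.trace_mul_comm]
    simp only [Matrix.mul_assoc]
  rw [Matrix.mul_assoc, ← Matrix.mul_assoc X, hXY]
  simp

lemma rank_pos_of_ne_zero {m : Type*} [Fintype m] {W : Matrix m m ℂ} (hW : W ≠ 0) :
    0 < W.rank := by
  classical
  rw [Nat.pos_iff_ne_zero]
  intro h
  rw [Matrix.rank, Submodule.finrank_eq_zero, LinearMap.range_eq_bot] at h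
  exact hW (Matrix.toLin'.injective (by rw [map_zero]; exact h))

lemma rank_add_le_rank_add_rank {m : Type*} [Fintype m] (M N : Matrix m m ℂ) :
    (M + N).rank ≤ M.rank + N.rank := by
  have hle : LinearMap.range (M + N).mulVecLin ≤
      LinearMap.range M.mulVecLin ⊔ LinearMap.range N.mulVecLin := by
    rw [Matrix.mulVecLin_add]
    exact LinearMap.range_add_le _ _
  exact (Submodule.finrank_mono hle).trans
    (Submodule.finrank_add_le_finrank_add_finrank _ _)

/-- If `B` is Hermitian positive definite, `h ≠ 0`, `c > 0`, `Z = B − c·hhᴴ` is PSD,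
and `W` is a nonzero PSD matrix with `tr(ZW) = 0`, then `Z` is singular with
`rank(Z) = n − 1`, and `rank(W) = 1`. -/
theorem stmt8 {n : ℕ} (B : Matrix (Fin n) (Fin n) ℂ) (hB : B.PosDef)
    (h : Fin n → ℂ) (hh : h ≠ 0) (c : ℝ) (hc : 0 < c)
    (Z : Matrix (Fin n) (Fin n) ℂ)
    (hZdef : Z = B - (c : ℂ) • vecMulVec h (star h))
    (hZ : Z.PosSemidef)
    (W : Matrix (Fin n) (Fin n) ℂ) (hW : W.PosSemidef) (hW0 : W ≠ 0)
    (htr : trace (Z * W) = 0) :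
    Z.det = 0 ∧ Z.rank = n - 1 ∧ W.rank = 1 := by
  have hZW : Z * W = 0 := mul_eq_zero_of_trace_mul_eq_zero hZ hW htr
  have hsum : Z.rank + W.rank ≤ n := by
    simpa using rank_add_rank_le_card_of_mul_eq_zero hZW
  have hWpos : 0 < W.rank := rank_pos_of_ne_zero hW0
  have hBrank : B.rank = n := by simpa using rank_of_isUnit B hB.isUnit
  have hBle : B.rank ≤ Z.rank + 1 := by
    have hB' : B = Z + vecMulVec ((c : ℂ) • h) (star h) := by
      rw [hZdef, smul_vecMulVec, sub_add_cancel]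
    calc B.rank = (Z + vecMulVec ((c : ℂ) • h) (star h)).rank := by rw [← hB']
      _ ≤ Z.rank + (vecMulVec ((c : ℂ) • h) (star h)).rank := rank_add_le_rank_add_rank _ _
      _ ≤ Z.rank + 1 := Nat.add_le_add_left (rank_vecMulVec_le _ _) _
  refine ⟨?_, by omega, by omega⟩
  by_contra hdet
  have hWr : (Z * W).rank = W.rank := rank_mul_eq_right_of_det_ne_zero Z W hdet
  rw [hZW, Matrix.rank_zero] at hWr
  omega
end

section
/- Let θ ∈ ℝ with cos θ ≠ 0 and let N_t, N_r ≥ 2 be integers with N_t ≠ N_r. Set a = a_{N_t}(θ), ȧ = ȧ_{N_t}(θ), b = a_{N_r}(θ), ḃ = ȧ_{N_r}(θ). For any β ∈ ℂ, define F = (‖ḃ‖² + |β|²‖b‖²)·a aᴴ + ‖b‖²·ȧ ȧᴴ + β‖b‖²·a ȧᴴ + β̄‖b‖²·ȧ aᴴ ∈ ℂ^{N_t×N_t}. Then F is Hermitian positive semidefinite of rank 2, and the largest eigenvalue of F is simple, i.e., it is strictly greater than its second-largest eigenvalue (counted with multiplicity), regardless of the value of β. -/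
/-!
Write `B = ‖b‖²` and `D = ‖ḃ‖²`. Completing the square gives
`F = D · a aᴴ + B · c cᴴ` with `c = ȧ + β a`, so `F = A Aᴴ` where `A` has the two columns
`√D a` and `√B c`. Centering makes `a` and `ȧ` orthogonal, and `cos θ ≠ 0`, `N ≥ 2` make them
nonzero, so the columns are independent and `F` is positive semidefinite of rank 2
(`rank_mul_conjTranspose_pair`).

If the top eigenvalue `μ` were repeated, the rank would force every other eigenvalue to vanish,
so `F² = μ F` by the spectral theorem (`simple_top_of_rank_two`). On the invariant plane spanned
by `a, ȧ` the invertible matrix of `F` would then be `μ` times the identity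
(`scalar_of_sq_eq_smul`). Its off-diagonal entry is a nonzero multiple of `β̄`, so `β = 0`, and
equality of the diagonal entries reads `‖ḃ‖² ‖a‖² = ‖b‖² ‖ȧ‖²`. As `‖a_N‖² = N` and
`‖ȧ_N‖² = π² cos² θ · N (N² - 1) / 12`, this forces `N_t = N_r`.
-/

open Matrix
open scoped ComplexOrder

/-- The squared norm `π² cos² θ · N (N² - 1) / 12` of the derivative vector. -/
noncomputable def derivSq (N : ℕ) (θ : ℝ) : ℝ :=
  (Real.pi * Real.cos θ) ^ 2 * ((N : ℝ) * ((N : ℝ) ^ 2 - 1) / 12)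

lemma derivSq_pos {N : ℕ} {θ : ℝ} (hN : 2 ≤ N) (hθ : Real.cos θ ≠ 0) : 0 < derivSq N θ := by
  have h : (2 : ℝ) ≤ N := by exact_mod_cast hN
  have h1 : 0 < (N : ℝ) ^ 2 - 1 := by nlinarith
  have h2 : Real.pi * Real.cos θ ≠ 0 := mul_ne_zero Real.pi_ne_zero hθ
  unfold derivSq
  positivity

lemma sum_sub (N : ℕ) (c : ℂ) :
    ∑ n : Fin N, ((n : ℂ) - c) = (N : ℂ) * (N - 1) / 2 - N * c := by
  rw [Fin.sum_univ_eq_sum_range (fun n : ℕ => ((n : ℂ) - c)) N]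
  induction N with
  | zero => simp
  | succ k ih => rw [Finset.sum_range_succ, ih]; push_cast; ring

lemma sum_sub_sq (N : ℕ) (c : ℂ) :
    ∑ n : Fin N, ((n : ℂ) - c) ^ 2
      = (N : ℂ) * (N - 1) * (2 * N - 1) / 6 - c * N * (N - 1) + N * c ^ 2 := by
  rw [Fin.sum_univ_eq_sum_range (fun n : ℕ => ((n : ℂ) - c) ^ 2) N]
  induction N with
  | zero => simp
  | succ k ih => rw [Finset.sum_range_succ, ih]; push_cast; ring

lemma star_steer_mul (N : ℕ) (θ : ℝ) (n : Fin N) :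
    star (ulaSteer N θ n) * ulaSteer N θ n = 1 := by
  unfold ulaSteer
  rw [Complex.star_def, ← Complex.exp_conj, ← Complex.exp_add]
  refine Eq.trans (congrArg Complex.exp ?_) Complex.exp_zero
  have h2 : (starRingEnd ℂ) 2 = 2 := map_ofNat _ 2
  simp only [map_mul, map_sub, map_div₀, map_natCast, map_one, h2, Complex.conj_I,
    Complex.conj_ofReal]
  ring

lemma star_deriv (N : ℕ) (θ : ℝ) (n : Fin N) :
    star (ulaSteerDeriv N θ n) = -(Complex.I * (Real.pi : ℂ) * (Real.cos θ : ℂ) *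
      ((n : ℂ) - ((N : ℂ) - 1) / 2)) * star (ulaSteer N θ n) := by
  unfold ulaSteerDeriv
  have h2 : (starRingEnd ℂ) 2 = 2 := map_ofNat _ 2
  simp only [Complex.star_def, map_mul, map_sub, map_div₀, map_natCast, map_one, h2,
    Complex.conj_I, Complex.conj_ofReal]
  ring

lemma steer_dot_steer (N : ℕ) (θ : ℝ) : star (ulaSteer N θ) ⬝ᵥ ulaSteer N θ = N := by
  simp only [dotProduct, Pi.star_apply, star_steer_mul]
  simp

lemma steer_dot_deriv (N : ℕ) (θ : ℝ) : star (ulaSteer N θ) ⬝ᵥ ulaSteerDeriv N θ = 0 := by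
  have h : ∀ n : Fin N, star (ulaSteer N θ n) * ulaSteerDeriv N θ n =
      Complex.I * (Real.pi : ℂ) * (Real.cos θ : ℂ) * ((n : ℂ) - ((N : ℂ) - 1) / 2) := by
    intro n
    have := star_steer_mul N θ n
    unfold ulaSteerDeriv
    linear_combination (Complex.I * (Real.pi : ℂ) * (Real.cos θ : ℂ) *
      ((n : ℂ) - ((N : ℂ) - 1) / 2)) * this
  simp only [dotProduct, Pi.star_apply, h]
  rw [← Finset.mul_sum, sum_sub]
  ring

lemma deriv_dot_steer (N : ℕ) (θ : ℝ) : star (ulaSteerDeriv N θ) ⬝ᵥ ulaSteer N θ = 0 := by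
  have h := congrArg star (steer_dot_deriv N θ)
  rwa [star_dotProduct, star_star, star_zero] at h

lemma deriv_dot_deriv (N : ℕ) (θ : ℝ) :
    star (ulaSteerDeriv N θ) ⬝ᵥ ulaSteerDeriv N θ = (derivSq N θ : ℂ) := by
  have h : ∀ n : Fin N, star (ulaSteerDeriv N θ n) * ulaSteerDeriv N θ n =
      ((Real.pi : ℂ) * (Real.cos θ : ℂ)) ^ 2 * ((n : ℂ) - ((N : ℂ) - 1) / 2) ^ 2 := by
    intro n
    have h1 := star_steer_mul N θ n
    rw [star_deriv]
    unfold ulaSteerDeriv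
    linear_combination (-(Complex.I * (Real.pi : ℂ) * (Real.cos θ : ℂ) *
      ((n : ℂ) - ((N : ℂ) - 1) / 2)) ^ 2) * h1 - ((Real.pi : ℂ) * (Real.cos θ : ℂ) *
      ((n : ℂ) - ((N : ℂ) - 1) / 2)) ^ 2 * Complex.I_sq
  simp only [dotProduct, Pi.star_apply, h]
  rw [← Finset.mul_sum, sum_sub_sq, derivSq]
  push_cast
  ring

lemma sum_normSq_eq {N : ℕ} {v : Fin N → ℂ} {r : ℝ} (h : star v ⬝ᵥ v = (r : ℂ)) :
    ∑ i, Complex.normSq (v i) = r := by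
  have h2 : ((∑ i, Complex.normSq (v i) : ℝ) : ℂ) = (r : ℂ) := by
    rw [← h, dotProduct]
    push_cast
    exact Finset.sum_congr rfl fun i _ => Complex.normSq_eq_conj_mul_self
  exact_mod_cast h2

/-- For independent `u, v` the sum `u uᴴ + v vᴴ` is `A Aᴴ` with `A = [u v]` of full column rank. -/
lemma rank_mul_conjTranspose_pair {N : ℕ} {u v : Fin N → ℂ}
    (h : LinearIndependent ℂ ![u, v]) :
    (vecMulVec u (star u) + vecMulVec v (star v)).PosSemidef ∧
      (vecMulVec u (star u) + vecMulVec v (star v)).rank = 2 := by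
  set R : Matrix (Fin 2) (Fin N) ℂ := Matrix.of ![u, v] with hR
  have hF : vecMulVec u (star u) + vecMulVec v (star v) = Rᵀ * Rᵀᴴ := by
    ext i j
    simp [Matrix.mul_apply, vecMulVec_apply, hR, Fin.sum_univ_two]
  rw [hF]
  refine ⟨posSemidef_self_mul_conjTranspose _, ?_⟩
  rw [rank_self_mul_conjTranspose, rank_transpose]
  simpa using LinearIndependent.rank_matrix (M := R) h

/-- A rank-two Hermitian positive semidefinite matrix has a strictly dominant eigenvalue as soon as
it is not a nonzero multiple of a projection. -/
lemma simple_top_of_rank_two {N : ℕ} {F : Matrix (Fin N) (Fin N) ℂ}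
    (hP : F.PosSemidef) (hr : F.rank = 2) (hno : ∀ μ : ℂ, F * F ≠ μ • F)
    (hH : F.IsHermitian) :
    ∃ i : Fin N, ∀ j : Fin N, j ≠ i → hH.eigenvalues j < hH.eigenvalues i := by
  have hcard := hH.rank_eq_card_non_zero_eigs
  rw [hr, Fintype.card_subtype] at hcard
  obtain ⟨k, hk⟩ : ∃ k, hH.eigenvalues k ≠ 0 := by
    by_contra! hc
    simp [hc] at hcard
  have : Nonempty (Fin N) := ⟨k⟩
  obtain ⟨i, hi⟩ := Finite.exists_max hH.eigenvalues
  refine ⟨i, fun j hj => lt_of_le_of_ne (hi j) fun hji => ?_⟩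
  have hi0 : hH.eigenvalues i ≠ 0 :=
    (((hP.eigenvalues_nonneg k).lt_of_ne' hk).trans_le (hi k)).ne'
  -- `i` and `j` already exhaust the two nonzero eigenvalues
  have hset : ({i, j} : Finset (Fin N)) = Finset.univ.filter fun l => hH.eigenvalues l ≠ 0 := by
    apply Finset.eq_of_subset_of_card_le
    · intro l hl
      simp only [Finset.mem_insert, Finset.mem_singleton] at hl
      rcases hl with rfl | rfl
      · simpa using hi0
      · simpa [hji] using hi0
    · rw [← hcard, Finset.card_pair hj.symm]
  have hall : ∀ l, hH.eigenvalues l * hH.eigenvalues l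
      = hH.eigenvalues i * hH.eigenvalues l := by
    intro l
    by_cases hl : hH.eigenvalues l = 0
    · simp [hl]
    · have : l ∈ ({i, j} : Finset (Fin N)) := by rw [hset]; simpa using hl
      simp only [Finset.mem_insert, Finset.mem_singleton] at this
      rcases this with rfl | rfl
      · rfl
      · rw [hji]
  apply hno (hH.eigenvalues i : ℂ)
  have hD : diagonal (RCLike.ofReal ∘ hH.eigenvalues : Fin N → ℂ) *
      diagonal (RCLike.ofReal ∘ hH.eigenvalues : Fin N → ℂ) =
      (hH.eigenvalues i : ℂ) • diagonal (RCLike.ofReal ∘ hH.eigenvalues : Fin N → ℂ) := by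
    rw [diagonal_mul_diagonal, ← diagonal_smul]
    congr 1
    funext l
    have h := congrArg (fun x : ℝ => (x : ℂ)) (hall l)
    push_cast at h
    exact h
  have h := congrArg (Unitary.conjStarAlgAut ℂ (Matrix (Fin N) (Fin N) ℂ) hH.eigenvectorUnitary) hD
  rwa [map_mul, map_smul, ← hH.spectral_theorem] at h

/-- If `M = [[p, r], [q, s]]` is invertible and `M² = μ M`, then `M = μ I`; only the equality of the
diagonal entries and the vanishing of `q` are recorded, and the entry `r` of `M²` is not needed. -/
lemma scalar_of_sq_eq_smul {p q r s μ : ℂ} (h1 : p * p + q * r = μ * p)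
    (h2 : p * q + q * s = μ * q) (h4 : r * q + s * s = μ * s)
    (hdet : p * s - q * r ≠ 0) : q = 0 ∧ p = s := by
  have hq : q = 0 := by
    by_contra hq
    have h : p + s = μ := mul_left_cancel₀ hq (by linear_combination h2)
    apply hdet
    linear_combination p * h - h1
  subst hq
  have hp : p ≠ 0 := by rintro rfl; simp at hdet
  have hs : s ≠ 0 := by rintro rfl; simp at hdet
  refine ⟨rfl, ?_⟩
  have e1 : p = μ := mul_right_cancel₀ hp (by linear_combination h1)
  have e2 : s = μ := mul_right_cancel₀ hs (by linear_combination h4)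
  rw [e1, e2]

/-- Nonzero orthogonal vectors `a, d` are independent, phrased through their Gram matrix. -/
lemma pair_coeff_zero {N : ℕ} {a d : Fin N → ℂ} {A D : ℂ}
    (haa : star a ⬝ᵥ a = A) (had : star a ⬝ᵥ d = 0) (hda : star d ⬝ᵥ a = 0)
    (hdd : star d ⬝ᵥ d = D) (hA : A ≠ 0) (hD : D ≠ 0) {x y : ℂ}
    (h : x • a + y • d = 0) : x = 0 ∧ y = 0 := by
  have h1 := congrArg (fun v => star a ⬝ᵥ v) h
  have h2 := congrArg (fun v => star d ⬝ᵥ v) h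
  simp only [dotProduct_add, dotProduct_smul, haa, had, hda, hdd, dotProduct_zero,
    smul_eq_mul, mul_zero, add_zero, zero_add] at h1 h2
  exact ⟨(mul_eq_zero.mp h1).resolve_right hA, (mul_eq_zero.mp h2).resolve_right hD⟩

/-- For `F = (‖ḃ‖² + |β|²‖b‖²)·aaᴴ + ‖b‖²·ȧȧᴴ + β‖b‖²·aȧᴴ + β̄‖b‖²·ȧaᴴ` built from the
ULA steering vectors with `cos θ ≠ 0`, `2 ≤ N_t, N_r`, and `N_t ≠ N_r`: `F` is Hermitian
positive semidefinite of rank 2, and its largest eigenvalue is simple (strictly larger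
than all other eigenvalues counted with multiplicity), regardless of `β ∈ ℂ`. -/
theorem stmt9 (θ : ℝ) (hθ : Real.cos θ ≠ 0) (Nt Nr : ℕ)
    (hNt : 2 ≤ Nt) (hNr : 2 ≤ Nr) (hne : Nt ≠ Nr) (β : ℂ)
    (a ad : Fin Nt → ℂ) (b bd : Fin Nr → ℂ)
    (hadef : a = ulaSteer Nt θ) (haddef : ad = ulaSteerDeriv Nt θ)
    (hbdef : b = ulaSteer Nr θ) (hbddef : bd = ulaSteerDeriv Nr θ)
    (F : Matrix (Fin Nt) (Fin Nt) ℂ)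
    (hF : F =
      (((∑ i, Complex.normSq (bd i)) + Complex.normSq β * ∑ i, Complex.normSq (b i) : ℝ) : ℂ)
          • vecMulVec a (star a)
      + ((∑ i, Complex.normSq (b i) : ℝ) : ℂ) • vecMulVec ad (star ad)
      + (β * ((∑ i, Complex.normSq (b i) : ℝ) : ℂ)) • vecMulVec a (star ad)
      + ((starRingEnd ℂ) β * ((∑ i, Complex.normSq (b i) : ℝ) : ℂ)) • vecMulVec ad (star a)) :
    F.PosSemidef ∧ F.rank = 2 ∧
    ∀ (hHerm : F.IsHermitian), ∃ i : Fin Nt, ∀ j : Fin Nt, j ≠ i →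
      hHerm.eigenvalues j < hHerm.eigenvalues i := by
  subst hadef haddef hbdef hbddef
  have hB : ∑ i, Complex.normSq (ulaSteer Nr θ i) = (Nr : ℝ) :=
    sum_normSq_eq (by rw [steer_dot_steer]; simp)
  have hBd : ∑ i, Complex.normSq (ulaSteerDeriv Nr θ i) = derivSq Nr θ :=
    sum_normSq_eq (deriv_dot_deriv Nr θ)
  rw [hB, hBd] at hF
  have haa := steer_dot_steer Nt θ
  have had := steer_dot_deriv Nt θ
  have hda := deriv_dot_steer Nt θ
  have hdd := deriv_dot_deriv Nt θ
  generalize ulaSteer Nt θ = a at *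
  generalize ulaSteerDeriv Nt θ = d at *
  have hDt : (derivSq Nt θ : ℂ) ≠ 0 := by exact_mod_cast (derivSq_pos hNt hθ).ne'
  have hDr0 := derivSq_pos hNr hθ
  have hDr : (derivSq Nr θ : ℂ) ≠ 0 := by exact_mod_cast hDr0.ne'
  have hNtC : (Nt : ℂ) ≠ 0 := by exact_mod_cast (by omega : Nt ≠ 0)
  have hNrC : (Nr : ℂ) ≠ 0 := by exact_mod_cast (by omega : Nr ≠ 0)
  have hzero {x y : ℂ} (h : x • a + y • d = 0) := pair_coeff_zero haa had hda hdd hNtC hDt h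
  have hnβ : (Complex.normSq β : ℂ) = (starRingEnd ℂ) β * β := Complex.normSq_eq_conj_mul_self
  -- square roots of `‖ḃ‖²` and `‖b‖²`, absorbed into the two vectors of the completed square
  set σ : ℂ := (Real.sqrt (derivSq Nr θ) : ℂ) with hσ
  set τ : ℂ := (Real.sqrt (Nr : ℝ) : ℂ) with hτ
  have hσ2 : σ * σ = (derivSq Nr θ : ℂ) := by
    rw [hσ, ← Complex.ofReal_mul, Real.mul_self_sqrt hDr0.le]
  have hτ2 : τ * τ = (Nr : ℂ) := by
    rw [hτ, ← Complex.ofReal_mul, Real.mul_self_sqrt (Nat.cast_nonneg _)]; simp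
  have hσs : (starRingEnd ℂ) σ = σ := Complex.conj_ofReal _
  have hτs : (starRingEnd ℂ) τ = τ := Complex.conj_ofReal _
  have hσ0 : σ ≠ 0 := by intro h; rw [h] at hσ2; simp at hσ2; exact hDr (by exact_mod_cast hσ2.symm)
  have hτ0 : τ ≠ 0 := by intro h; rw [h] at hτ2; simp at hτ2; exact hNrC (by exact_mod_cast hτ2.symm)
  have hsq : F = vecMulVec (σ • a) (star (σ • a)) +
      vecMulVec (τ • (d + β • a)) (star (τ • (d + β • a))) := by
    rw [hF]
    ext i j
    simp only [Matrix.add_apply, Matrix.smul_apply, vecMulVec_apply, Pi.star_apply, Pi.smul_apply,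
      Pi.add_apply, smul_eq_mul, star_mul', star_add, Complex.star_def, hσs, hτs]
    push_cast
    rw [hnβ, ← hσ2, ← hτ2]
    ring
  have hli : LinearIndependent ℂ ![σ • a, τ • (d + β • a)] := by
    rw [LinearIndependent.pair_iff]
    intro x y h
    obtain ⟨h1, h2⟩ := hzero (x := x * σ + y * τ * β) (y := y * τ) (by rw [← h]; module)
    have hy : y = 0 := (mul_eq_zero.mp h2).resolve_right hτ0
    subst hy
    simp only [zero_mul, add_zero] at h1
    exact ⟨(mul_eq_zero.mp h1).resolve_right hσ0, rfl⟩
  obtain ⟨hP, hr⟩ := rank_mul_conjTranspose_pair hli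
  rw [← hsq] at hP hr
  refine ⟨hP, hr, fun hH => simple_top_of_rank_two hP hr (fun μ hμ => ?_) hH⟩
  -- the matrix of `F` in the basis `a, d` is `[[p, r], [q, s]]`
  obtain ⟨p, hp⟩ : ∃ p : ℂ, p = (derivSq Nr θ + (starRingEnd ℂ) β * β * Nr) * Nt := ⟨_, rfl⟩
  obtain ⟨q, hq⟩ : ∃ q : ℂ, q = (starRingEnd ℂ) β * Nr * Nt := ⟨_, rfl⟩
  obtain ⟨r, hr'⟩ : ∃ r : ℂ, r = β * Nr * derivSq Nt θ := ⟨_, rfl⟩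
  obtain ⟨s, hs⟩ : ∃ s : ℂ, s = Nr * derivSq Nt θ := ⟨_, rfl⟩
  have hvm (u v w : Fin Nt → ℂ) : vecMulVec u v *ᵥ w = (v ⬝ᵥ w) • u := by
    ext i
    simp [Matrix.vecMulVec_mulVec, mul_comm]
  have hFa : F *ᵥ a = p • a + q • d := by
    rw [hF, hp, hq]
    simp only [add_mulVec, smul_mulVec, hvm, haa, hda]
    push_cast
    rw [hnβ]
    module
  have hFd : F *ᵥ d = r • a + s • d := by
    rw [hF, hr', hs]
    simp only [add_mulVec, smul_mulVec, hvm, had, hdd]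
    push_cast
    module
  have hFFa : F *ᵥ (F *ᵥ a) = μ • (F *ᵥ a) := by rw [mulVec_mulVec, hμ, smul_mulVec]
  have hFFd : F *ᵥ (F *ᵥ d) = μ • (F *ᵥ d) := by rw [mulVec_mulVec, hμ, smul_mulVec]
  simp only [hFa, hFd, mulVec_add, mulVec_smul] at hFFa hFFd
  obtain ⟨e1, e2⟩ := hzero (x := p * p + q * r - μ * p) (y := p * q + q * s - μ * q)
    (by rw [← sub_eq_zero] at hFFa; rw [← hFFa]; module)
  obtain ⟨-, e4⟩ := hzero (x := r * p + s * r - μ * r) (y := r * q + s * s - μ * s)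
    (by rw [← sub_eq_zero] at hFFd; rw [← hFFd]; module)
  have hdet : p * s - q * r ≠ 0 := by
    have : p * s - q * r = derivSq Nr θ * Nt * (Nr * derivSq Nt θ) := by
      rw [hp, hq, hr', hs]; ring
    rw [this]
    exact mul_ne_zero (mul_ne_zero hDr hNtC) (mul_ne_zero hNrC hDt)
  obtain ⟨hq0, hps⟩ := scalar_of_sq_eq_smul (sub_eq_zero.mp e1) (sub_eq_zero.mp e2)
    (sub_eq_zero.mp e4) hdet
  have hβ : (starRingEnd ℂ) β = 0 := by
    rw [hq] at hq0
    simpa [hNtC, hNrC] using hq0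
  rw [hp, hs, hβ] at hps
  have hreal : derivSq Nr θ * (Nt : ℝ) = (Nr : ℝ) * derivSq Nt θ := by
    simp only [zero_mul, add_zero] at hps
    exact_mod_cast hps
  have hK : (Real.pi * Real.cos θ) ^ 2 * (Nr : ℝ) * Nt ≠ 0 := by
    have h1 : (Nr : ℝ) ≠ 0 := by exact_mod_cast hNrC
    have h2 : (Nt : ℝ) ≠ 0 := by exact_mod_cast hNtC
    have h3 := Real.pi_ne_zero
    positivity
  have hsqeq : (Nt : ℝ) ^ 2 = (Nr : ℝ) ^ 2 := by
    apply mul_left_cancel₀ hK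
    unfold derivSq at hreal
    linear_combination -12 * hreal
  have : Nt ^ 2 = Nr ^ 2 := by exact_mod_cast hsqeq
  exact hne (Nat.pow_left_injective two_ne_zero this)
end

section
/- Let N ≥ 1, let a, ȧ ∈ ℂ^N be linearly independent over ℂ, let Ā = [a, ȧ] ∈ ℂ^{N×2}, let S ∈ ℂ^{2×2} be Hermitian positive definite, and set F = Ā S Āᴴ. Let M ≥ 1, let h₁,…,h_M ∈ ℂ^N, let μ₁,…,μ_M and Γ₁,…,Γ_M be positive reals, let μ_T > 0, and set F̄ = F − Σ_{i=1}^M μ_i Γ_i h_i h_iᴴ. Assume that for every k = 1,…,M the matrix μ_T I − F̄ − μ_k(1+Γ_k) h_k h_kᴴ is positive semidefinite. If the M×2 complex matrix whose k-th row is (h_kᴴ a, h_kᴴ ȧ) has rank 2, then μ_T I − F̄ is positive definite. -/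
/-!
Write `A = μ_T I - F̄` and `Z_k = A - μ_k(1+Γ_k) h_k h_kᴴ`. Each `Z_k` is positive semidefinite, hence
so is `A`, and definiteness only requires that `A` have trivial kernel. If `A x = 0`, then
`0 = xᴴ A x = xᴴ Z_k x + μ_k(1+Γ_k)|h_kᴴ x|²`, a sum of nonnegative terms, so `h_kᴴ x = 0` for every
`k` (`dotProduct_eq_zero_of_add_smul_vecMulVec`). The rank-one terms of `F̄` therefore vanish on `x`
and `A x = 0` reads `μ_T x = Ā S Āᴴ x`, so that `x = Ā v` with `v = μ_T⁻¹ S Āᴴ x`. The `k`-th entry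
of `D v` is `h_kᴴ Ā v = h_kᴴ x = 0`, and since `D` has full column rank
(`eq_zero_of_mulVec_eq_zero_of_rank`), `v = 0` and `x = 0`.
-/

open Matrix
open scoped ComplexOrder

/-- A positive semidefinite matrix plus a positive multiple of `u uᴴ` has its kernel inside `uᗮ`. -/
lemma dotProduct_eq_zero_of_add_smul_vecMulVec {n : Type*} [Fintype n] {Z : Matrix n n ℂ}
    (hZ : Z.PosSemidef) {c : ℝ} (hc : 0 < c) (u x : n → ℂ)
    (hx : (Z + (c : ℂ) • vecMulVec u (star u)) *ᵥ x = 0) : star u ⬝ᵥ x = 0 := by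
  have hsq : star x ⬝ᵥ (vecMulVec u (star u) *ᵥ x) = star (star u ⬝ᵥ x) * (star u ⬝ᵥ x) := by
    rw [vecMulVec_mulVec, dotProduct_smul, star_dotProduct, star_star]
    simp [dotProduct_comm]
  have hc' : (0 : ℂ) < (c : ℂ) := by exact_mod_cast hc
  have h0 : star x ⬝ᵥ (Z *ᵥ x) + (c : ℂ) * (star (star u ⬝ᵥ x) * (star u ⬝ᵥ x)) = 0 := by
    rw [← hsq, ← smul_eq_mul, ← dotProduct_smul, ← smul_mulVec, ← dotProduct_add, ← add_mulVec, hx,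
      dotProduct_zero]
  have h1 := ((add_eq_zero_iff_of_nonneg (hZ.dotProduct_mulVec_nonneg x)
    (mul_nonneg hc'.le (star_mul_self_nonneg _))).1 h0).2
  simpa [hc.ne'] using h1

lemma eq_zero_of_mulVec_eq_zero_of_rank {m : Type*} {n : Type*} [Fintype n]
    {D : Matrix m n ℂ} (hD : D.rank = Fintype.card n) {v : n → ℂ} (hv : D *ᵥ v = 0) : v = 0 := by
  have hn := LinearMap.finrank_range_add_finrank_ker D.mulVecLin
  have hk : Module.finrank ℂ (LinearMap.ker D.mulVecLin) = 0 := by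
    rw [Module.finrank_pi] at hn
    rw [Matrix.rank] at hD
    omega
  exact Matrix.ker_mulVecLin_eq_bot_iff.1 (Submodule.finrank_eq_zero.1 hk) v hv

/-- Lemma 3 of the paper (generalized): with `a, ȧ` linearly independent,
`Ā = [a, ȧ]`, `S ≻ 0`, `F = ĀSĀᴴ`, `F̄ = F − Σᵢ μᵢΓᵢ hᵢhᵢᴴ`, if
`μ_T I − F̄ − μ_k(1+Γ_k) h_k h_kᴴ ⪰ 0` for every `k` and the `M×2` matrix whose
`k`-th row is `(h_kᴴa, h_kᴴȧ)` has full column rank (rank 2), then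
`μ_T I − F̄ ≻ 0`. -/
theorem stmt10 {N M : ℕ} (hN : 1 ≤ N) (hM : 1 ≤ M)
    (a ad : Fin N → ℂ) (hind : LinearIndependent ℂ ![a, ad])
    (Abar : Matrix (Fin N) (Fin 2) ℂ)
    (hAbar : Abar = Matrix.of fun i j => ![a i, ad i] j)
    (S : Matrix (Fin 2) (Fin 2) ℂ) (hS : S.PosDef)
    (F : Matrix (Fin N) (Fin N) ℂ) (hF : F = Abar * S * Abarᴴ)
    (h : Fin M → Fin N → ℂ) (μ Γ : Fin M → ℝ)
    (hμ : ∀ i, 0 < μ i) (hΓ : ∀ i, 0 < Γ i)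
    (μT : ℝ) (hμT : 0 < μT)
    (Fbar : Matrix (Fin N) (Fin N) ℂ)
    (hFbar : Fbar = F - ∑ i, ((μ i * Γ i : ℝ) : ℂ) • vecMulVec (h i) (star (h i)))
    (hZ : ∀ k, ((μT : ℂ) • (1 : Matrix (Fin N) (Fin N) ℂ) - Fbar
      - ((μ k * (1 + Γ k) : ℝ) : ℂ) • vecMulVec (h k) (star (h k))).PosSemidef)
    (D : Matrix (Fin M) (Fin 2) ℂ)
    (hD : D = Matrix.of fun k j => ![star (h k) ⬝ᵥ a, star (h k) ⬝ᵥ ad] j)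
    (hrank : D.rank = 2) :
    ((μT : ℂ) • (1 : Matrix (Fin N) (Fin N) ℂ) - Fbar).PosDef := by
  have hc : ∀ k, 0 < μ k * (1 + Γ k) := fun k => mul_pos (hμ k) (by linarith [hΓ k])
  set A := (μT : ℂ) • (1 : Matrix (Fin N) (Fin N) ℂ) - Fbar with hA
  have hpsd : A.PosSemidef := by
    have h1 := (hZ ⟨0, hM⟩).add ((posSemidef_vecMulVec_self_star (h ⟨0, hM⟩)).smul
      (α := ℂ) (a := ((μ ⟨0, hM⟩ * (1 + Γ ⟨0, hM⟩) : ℝ) : ℂ)) (by exact_mod_cast (hc _).le))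
    rwa [sub_add_cancel] at h1
  refine PosDef.of_dotProduct_mulVec_pos hpsd.1 fun x hx =>
    lt_of_le_of_ne (hpsd.dotProduct_mulVec_nonneg x) fun h0 => hx ?_
  have hAx : A *ᵥ x = 0 := (hpsd.dotProduct_mulVec_zero_iff x).1 h0.symm
  have hhx : ∀ k, star (h k) ⬝ᵥ x = 0 := fun k =>
    dotProduct_eq_zero_of_add_smul_vecMulVec (hZ k) (hc k) (h k) x (by rwa [sub_add_cancel])
  have hFx : Fbar *ᵥ x = F *ᵥ x := by
    simp [hFbar, sub_mulVec, sum_mulVec, smul_mulVec, vecMulVec_mulVec, hhx]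
  have hμx : (μT : ℂ) • x = Abar *ᵥ (S *ᵥ (Abarᴴ *ᵥ x)) := by
    rw [mulVec_mulVec, mulVec_mulVec, ← hF, ← hFx]
    simpa [hA, sub_mulVec, smul_mulVec, sub_eq_zero] using hAx
  have hμT' : (μT : ℂ) ≠ 0 := by exact_mod_cast hμT.ne'
  have hxv : x = Abar *ᵥ ((μT : ℂ)⁻¹ • (S *ᵥ (Abarᴴ *ᵥ x))) := by
    rw [mulVec_smul, ← hμx, smul_smul, inv_mul_cancel₀ hμT', one_smul]
  generalize (μT : ℂ)⁻¹ • (S *ᵥ (Abarᴴ *ᵥ x)) = v at hxv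
  have hDA : D = (Matrix.of fun k => star (h k)) * Abar := by
    ext k j
    fin_cases j <;> simp [hD, hAbar, Matrix.mul_apply, dotProduct]
  have hDv : D *ᵥ v = 0 := by
    rw [hDA, ← mulVec_mulVec, ← hxv]
    exact funext hhx
  rw [hxv, eq_zero_of_mulVec_eq_zero_of_rank (by simpa using hrank) hDv, mulVec_zero]
end

section
/- Consider Problem (P2) with N ≥ 1 and Γσ² < P_T‖h‖². If (P2) attains its minimum, then there exists an optimal solution (R, W) of (P2) such that h is an eigenvector of R and W = t·h hᴴ for some real t ≥ 0. -/
/-!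
Averaging an optimal `R` over the reflection `Q = 2P - 1`, where `P` is the orthogonal projection
onto the line through `h`, gives `S = (R + QRQ)/2 = PRP + (1-P)R(1-P)`, the *pinching* of `R`.
The pair `(S, PWP)` is again feasible: pinching preserves positivity, the trace and the quadratic
form at `h`, and `S - PWP = P(R-W)P + (1-P)R(1-P)`. Since `S` commutes with `P`, the vector `h` is
an eigenvector of `S`, and `PWP` is a nonnegative multiple of `h hᴴ`.

The objective does not increase (`trace_inv_pinch_le`). Expanding
`0 ≤ tr ((R⁻¹ - S⁻¹) R (R⁻¹ - S⁻¹))` gives the tangent-line bound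
`2 tr S⁻¹ - tr (S⁻¹ R S⁻¹) ≤ tr R⁻¹`, and, because `S⁻¹` commutes with `P`, pinching does not
change the second trace: `tr (S⁻¹ R S⁻¹) = tr (S⁻¹ S S⁻¹) = tr S⁻¹`.
-/

open Matrix
open scoped ComplexOrder

/-- Feasibility for Problem (P2): `R ≻ 0`, `W ⪰ 0`, `R − W ⪰ 0`, `tr(R) ≤ P_T`, and
`(1+Γ)(hᴴWh) − Γ(hᴴRh) ≥ Γσ²`. -/
def P2Feasible {N : ℕ} (h : Fin N → ℂ) (Γ σ2 PT : ℝ)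
    (R W : Matrix (Fin N) (Fin N) ℂ) : Prop :=
  R.PosDef ∧ W.PosSemidef ∧ (R - W).PosSemidef ∧ (trace R).re ≤ PT ∧
  Γ * σ2 ≤ (1 + Γ) * (star h ⬝ᵥ W *ᵥ h).re - Γ * (star h ⬝ᵥ R *ᵥ h).re

/-- Optimality for Problem (P2): feasible, and `tr(R⁻¹)` at most that of every
feasible pair. -/
def P2Optimal {N : ℕ} (h : Fin N → ℂ) (Γ σ2 PT : ℝ)
    (R W : Matrix (Fin N) (Fin N) ℂ) : Prop :=
  P2Feasible h Γ σ2 PT R W ∧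
  ∀ R' W' : Matrix (Fin N) (Fin N) ℂ, P2Feasible h Γ σ2 PT R' W' →
    (trace R⁻¹).re ≤ (trace R'⁻¹).re

/-- The pinching `PRP + (1-P)R(1-P)` of `R` by `P`; used for an orthogonal projection `P`. -/
def pinch {N : ℕ} (P R : Matrix (Fin N) (Fin N) ℂ) : Matrix (Fin N) (Fin N) ℂ :=
  P * R * P + (1 - P) * R * (1 - P)

/-- A pinching is the average of `R` and its conjugate by the reflection `2P - 1`, so strict
positivity is inherited from the first summand. -/
lemma pinch_posDef {N : ℕ} {P R : Matrix (Fin N) (Fin N) ℂ} (hP : Pᴴ = P)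
    (hR : R.PosDef) : (pinch P R).PosDef := by
  have h1 : (R + (2 * P - 1) * R * (2 * P - 1)ᴴ).PosDef :=
    hR.add_posSemidef (hR.posSemidef.mul_mul_conjTranspose_same _)
  have hQ : (2 * P - 1 : Matrix (Fin N) (Fin N) ℂ)ᴴ = 2 * P - 1 := by
    rw [two_mul, conjTranspose_sub, conjTranspose_add, hP, conjTranspose_one]
  have h2 : pinch P R = (1 / 2 : ℂ) • (R + (2 * P - 1) * R * (2 * P - 1)ᴴ) := by
    have h3 : R + (2 * P - 1) * R * (2 * P - 1) = (2 : ℂ) • pinch P R := by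
      rw [two_smul]; unfold pinch; noncomm_ring
    rw [hQ, h3, smul_smul]; norm_num
  rw [h2]
  exact h1.smul (by simp)

/-- Both sides equal `P R P`. -/
lemma pinch_commute {N : ℕ} {P : Matrix (Fin N) (Fin N) ℂ} (hPP : P * P = P)
    (R : Matrix (Fin N) (Fin N) ℂ) : P * pinch P R = pinch P R * P := by
  have h1 : P * (1 - P) = 0 := by rw [mul_sub, hPP, mul_one, sub_self]
  have h2 : (1 - P) * P = 0 := by rw [sub_mul, hPP, one_mul, sub_self]
  have e1 : P * pinch P R = (P * P) * R * P + (P * (1 - P)) * R * (1 - P) := by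
    unfold pinch; simp only [mul_add, mul_assoc]
  have e2 : pinch P R * P = P * R * (P * P) + (1 - P) * R * ((1 - P) * P) := by
    unfold pinch; simp only [add_mul, mul_assoc]
  rw [e1, e2, h1, h2, hPP]; simp

/-- Pinching is invisible to the trace against any matrix commuting with `P`. -/
lemma trace_pinch_mul {N : ℕ} {P : Matrix (Fin N) (Fin N) ℂ} (hPP : P * P = P)
    (R : Matrix (Fin N) (Fin N) ℂ) {T : Matrix (Fin N) (Fin N) ℂ} (hT : P * T = T * P) :
    trace (pinch P R * T) = trace (R * T) := by
  have e1 : trace (P * R * P * T) = trace (R * T * P) := by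
    rw [mul_assoc, mul_assoc, trace_mul_comm, mul_assoc, mul_assoc, ← hT, ← mul_assoc P P, hPP,
      hT, ← mul_assoc]
  have hC : (1 - P) * T = T * (1 - P) := by rw [sub_mul, mul_sub, hT]; simp
  have hCC : (1 - P) * (1 - P) = 1 - P := by
    rw [mul_sub, sub_mul 1 P P, hPP]; simp
  have e2 : trace ((1 - P) * R * (1 - P) * T) = trace (R * T * (1 - P)) := by
    rw [mul_assoc, mul_assoc, trace_mul_comm, mul_assoc, mul_assoc, ← hC, ← mul_assoc (1 - P), hCC,
      hC, ← mul_assoc]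
  rw [pinch, add_mul, trace_add, e1, e2, ← trace_add, ← mul_add]
  simp

/-- The tangent-line inequality for the convex function `R ↦ tr R⁻¹` at `S`. -/
lemma trace_inv_tangent {N : ℕ} {R S : Matrix (Fin N) (Fin N) ℂ} (hR : R.PosDef)
    (hS : S.PosDef) :
    2 * (trace S⁻¹).re - (trace (S⁻¹ * R * S⁻¹)).re ≤ (trace R⁻¹).re := by
  have hRu := (isUnit_iff_isUnit_det R).mp hR.isUnit
  have h1 := (hR.posSemidef.mul_mul_conjTranspose_same (R⁻¹ - S⁻¹)).trace_nonneg
  have h2 : (R⁻¹ - S⁻¹)ᴴ = R⁻¹ - S⁻¹ := (hR.isHermitian.inv.sub hS.isHermitian.inv).eq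
  have h3 : (R⁻¹ - S⁻¹) * R * (R⁻¹ - S⁻¹) = R⁻¹ - S⁻¹ - S⁻¹ + S⁻¹ * R * S⁻¹ := by
    have a := nonsing_inv_mul R hRu
    have b := mul_nonsing_inv R hRu
    rw [sub_mul, a, mul_sub, sub_mul, sub_mul, mul_assoc S⁻¹ R R⁻¹, b]
    simp only [one_mul, mul_one]
    abel
  rw [h2, h3] at h1
  have h4 := (Complex.nonneg_iff.mp h1).1
  simp only [trace_add, trace_sub, Complex.add_re, Complex.sub_re] at h4
  linarith

lemma trace_inv_pinch_le {N : ℕ} {P R : Matrix (Fin N) (Fin N) ℂ} (hP : Pᴴ = P)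
    (hPP : P * P = P) (hR : R.PosDef) : (trace (pinch P R)⁻¹).re ≤ (trace R⁻¹).re := by
  have hS := pinch_posDef hP hR
  have hSu := (isUnit_iff_isUnit_det _).mp hS.isUnit
  have hc := pinch_commute hPP R
  have ht := trace_inv_tangent hR hS
  have hT := trace_pinch_mul hPP R (T := (pinch P R)⁻¹ * (pinch P R)⁻¹)
  generalize pinch P R = S at *
  have hi : P * S⁻¹ = S⁻¹ * P := by
    have := congrArg (fun X => S⁻¹ * X * S⁻¹) hc
    simp only [mul_assoc, mul_nonsing_inv S hSu, mul_one] at this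
    simp only [← mul_assoc, nonsing_inv_mul S hSu, one_mul] at this
    exact this.symm
  have hT' := hT (by rw [← mul_assoc, hi, mul_assoc, hi, mul_assoc])
  have h5 : trace (S⁻¹ * R * S⁻¹) = trace S⁻¹ := by
    rw [mul_assoc, trace_mul_comm, mul_assoc, ← hT', ← mul_assoc, mul_nonsing_inv S hSu, one_mul]
  rw [h5] at ht
  linarith


/-- If (P2) is strictly feasible (`Γσ² < P_T‖h‖²`) and attains its minimum, then there
is an optimal solution `(R, W)` in which `h` is an eigenvector of `R` and
`W = t·hhᴴ` for some real `t ≥ 0`. -/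
theorem stmt11 {N : ℕ} (hN : 1 ≤ N) (h : Fin N → ℂ) (hh : h ≠ 0)
    (Γ σ2 PT : ℝ) (hΓ : 0 < Γ) (hσ : 0 < σ2) (hPT : 0 < PT)
    (hstrict : Γ * σ2 < PT * ∑ i, Complex.normSq (h i))
    (hattain : ∃ R W : Matrix (Fin N) (Fin N) ℂ, P2Optimal h Γ σ2 PT R W) :
    ∃ R W : Matrix (Fin N) (Fin N) ℂ, P2Optimal h Γ σ2 PT R W ∧
      (∃ c : ℂ, R *ᵥ h = c • h) ∧
      (∃ t : ℝ, 0 ≤ t ∧ W = (t : ℂ) • vecMulVec h (star h)) := by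
  obtain ⟨R, W, ⟨hR, hW, hRW, htr, hsnr⟩, hopt⟩ := hattain
  have hn : 0 < star h ⬝ᵥ h := dotProduct_star_self_pos_iff.mpr hh
  set n : ℂ := star h ⬝ᵥ h with hn_def
  have hn0 : n ≠ 0 := hn.ne'
  have hns : star n = n := (IsSelfAdjoint.of_nonneg hn.le).star_eq
  obtain ⟨P, hPdef⟩ : ∃ P, P = n⁻¹ • vecMulVec h (star h) := ⟨_, rfl⟩
  have hP : Pᴴ = P := by
    rw [hPdef, conjTranspose_smul, conjTranspose_vecMulVec, star_star, star_inv₀, hns]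
  have hPmul : ∀ x, P *ᵥ x = (n⁻¹ * (star h ⬝ᵥ x)) • h := by
    intro x
    rw [hPdef, smul_mulVec, vecMulVec_mulVec, op_smul_eq_smul, smul_smul]
  have hPh : P *ᵥ h = h := by rw [hPmul, ← hn_def, inv_mul_cancel₀ hn0, one_smul]
  have hPP : P * P = P := by
    nth_rewrite 2 [hPdef]
    rw [mul_smul_comm, mul_vecMulVec, hPh, hPdef]
  have hhP : star h ᵥ* P = star h := by
    rw [← hP, ← star_mulVec, hPh]
  have hform : ∀ X, star h ⬝ᵥ (P * X * P) *ᵥ h = star h ⬝ᵥ X *ᵥ h := by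
    intro X
    rw [← mulVec_mulVec, hPh, ← mulVec_mulVec, dotProduct_mulVec, hhP]
  have hCh : (1 - P) *ᵥ h = 0 := by rw [sub_mulVec, one_mulVec, hPh, sub_self]
  have hformR : star h ⬝ᵥ pinch P R *ᵥ h = star h ⬝ᵥ R *ᵥ h := by
    rw [pinch, add_mulVec, dotProduct_add, hform, ← mulVec_mulVec, hCh]; simp
  have hC : (1 - P)ᴴ = 1 - P := by rw [conjTranspose_sub, conjTranspose_one, hP]
  refine ⟨pinch P R, P * W * P, ⟨⟨pinch_posDef hP hR, ?_, ?_, ?_, ?_⟩, ?_⟩, ?_, ?_⟩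
  · simpa only [hP] using hW.mul_mul_conjTranspose_same P
  · have h1 := (hRW.mul_mul_conjTranspose_same P).add
      (hR.posSemidef.mul_mul_conjTranspose_same (1 - P))
    rw [hP, hC] at h1
    have e : pinch P R - P * W * P = P * (R - W) * P + (1 - P) * R * (1 - P) := by
      rw [pinch, mul_sub P R W, sub_mul (P * R), add_sub_right_comm]
    rwa [e]
  · have := trace_pinch_mul hPP R (T := 1) (by simp)
    rw [mul_one, mul_one] at this
    rwa [this]
  · rwa [hform, hformR]
  · exact fun R' W' h' => (trace_inv_pinch_le hP hPP hR).trans (hopt R' W' h')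
  · refine ⟨n⁻¹ * (star h ⬝ᵥ pinch P R *ᵥ h), ?_⟩
    rw [← hPmul, mulVec_mulVec, pinch_commute hPP, ← mulVec_mulVec, hPh]
  · have hz : 0 ≤ n⁻¹ * (n⁻¹ * (star h ⬝ᵥ W *ᵥ h)) :=
      mul_nonneg (inv_nonneg.mpr hn.le)
        (mul_nonneg (inv_nonneg.mpr hn.le) (hW.dotProduct_mulVec_nonneg h))
    refine ⟨_, (Complex.nonneg_iff.mp hz).1, ?_⟩
    rw [← Complex.eq_re_of_ofReal_le (r := 0) (by simpa using hz)]
    nth_rewrite 2 [hPdef]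
    rw [mul_smul_comm, mul_vecMulVec, ← mulVec_mulVec, hPmul, smul_vecMulVec, smul_smul]
end

section
/- Consider Problem (P2) with N ≥ 1, and assume Γ < P_T‖h‖²/(N σ²). Then the pair W = (P_T/N) · h hᴴ/‖h‖² and R = (P_T/N) · I is an optimal solution of (P2), and the optimal value is N²/P_T. -/
/-!
The inverse trace is bounded below on all positive definite matrices of bounded trace. For real `c`
and `R` positive definite, `(1 - c R) R⁻¹ (1 - c R)ᴴ = R⁻¹ - 2c + c² R` is positive semidefinite,
so `tr R⁻¹ ≥ 2cN - c² tr R` (`trace_inv_ge`); with `tr R ≤ P` and `c = N / P` this reads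
`tr R⁻¹ ≥ N² / P`. The multiple `(P_T / N) I` attains the bound.

It remains to see that the given pair is feasible. Here `R - W = (P_T / N) (1 - h hᴴ / ‖h‖²)` is a
nonnegative multiple of an orthogonal projection (`one_sub_proj_posSemidef`), and
`hᴴWh = hᴴRh = P_T ‖h‖² / N`, so the last constraint reduces to `Γσ² ≤ P_T ‖h‖² / N`.
-/

open Matrix
open scoped ComplexOrder

/-- Tangent-line form of the trace inequality between a positive definite matrix and its inverse. -/
lemma trace_inv_ge {N : ℕ} {R : Matrix (Fin N) (Fin N) ℂ} (hR : R.PosDef) (c : ℝ) :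
    2 * c * N - c ^ 2 * (trace R).re ≤ (trace R⁻¹).re := by
  have hdet : IsUnit R.det := (Matrix.isUnit_iff_isUnit_det R).1 hR.isUnit
  have hps := hR.inv.posSemidef.mul_mul_conjTranspose_same (1 - (c : ℂ) • R)
  have hexp : (1 - (c : ℂ) • R) * R⁻¹ * (1 - (c : ℂ) • R)ᴴ
      = R⁻¹ - (2 * c : ℂ) • (1 : Matrix (Fin N) (Fin N) ℂ) + (c ^ 2 : ℂ) • R := by
    have hH : (1 - (c : ℂ) • R)ᴴ = 1 - (c : ℂ) • R := by
      simp [conjTranspose_sub, conjTranspose_smul, hR.1.eq]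
    rw [hH]
    simp only [sub_mul, mul_sub, one_mul, mul_one, smul_mul_assoc, mul_smul_comm,
      Matrix.mul_nonsing_inv R hdet, Matrix.nonsing_inv_mul R hdet]
    module
  rw [hexp] at hps
  have h0 := (Complex.le_def.1 hps.trace_nonneg).1
  simp only [trace_add, trace_sub, trace_smul, trace_one, Fintype.card_fin, smul_eq_mul,
    ← Complex.ofReal_pow, Complex.add_re, Complex.sub_re, Complex.re_ofReal_mul,
    Complex.zero_re] at h0
  norm_num at h0
  linarith

lemma star_dotProduct_self_eq {N : ℕ} (h : Fin N → ℂ) :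
    star h ⬝ᵥ h = ((∑ i, Complex.normSq (h i) : ℝ) : ℂ) := by
  simp [dotProduct, Complex.normSq_eq_conj_mul_self]

/-- `1 - h hᴴ / ‖h‖²` is Hermitian and idempotent, hence of the form `Pᴴ P`. -/
lemma one_sub_proj_posSemidef {N : ℕ} (h : Fin N → ℂ) {S : ℝ} (hS : S ≠ 0)
    (hhS : star h ⬝ᵥ h = (S : ℂ)) :
    (1 - ((S⁻¹ : ℝ) : ℂ) • vecMulVec h (star h)).PosSemidef := by
  have hS' : (S : ℂ) ≠ 0 := by exact_mod_cast hS
  have hP : (1 - ((S⁻¹ : ℝ) : ℂ) • vecMulVec h (star h))ᴴ *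
      (1 - ((S⁻¹ : ℝ) : ℂ) • vecMulVec h (star h))
      = 1 - ((S⁻¹ : ℝ) : ℂ) • vecMulVec h (star h) := by
    have hH : (1 - ((S⁻¹ : ℝ) : ℂ) • vecMulVec h (star h))ᴴ
        = 1 - ((S⁻¹ : ℝ) : ℂ) • vecMulVec h (star h) := by
      simp [conjTranspose_sub, conjTranspose_smul, conjTranspose_vecMulVec]
    have hsq : vecMulVec h (star h) * vecMulVec h (star h) = (S : ℂ) • vecMulVec h (star h) := by
      rw [vecMulVec_mul_vecMulVec, hhS, vecMulVec_smul]
    rw [hH]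
    simp only [sub_mul, mul_sub, one_mul, mul_one, smul_mul_assoc, mul_smul_comm, hsq, smul_smul]
    rw [Complex.ofReal_inv, inv_mul_cancel₀ hS', one_smul, sub_self, smul_zero, sub_zero]
  rw [← hP]
  exact posSemidef_conjTranspose_mul_self _

/-- If `Γ < P_T‖h‖²/(Nσ²)`, then `W = (P_T/N)·hhᴴ/‖h‖²`, `R = (P_T/N)·I` is an optimal
solution of (P2), with optimal value `N²/P_T`. -/
theorem stmt12 {N : ℕ} (hN : 1 ≤ N) (h : Fin N → ℂ) (hh : h ≠ 0)
    (Γ σ2 PT : ℝ) (hΓ : 0 < Γ) (hσ : 0 < σ2) (hPT : 0 < PT)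
    (hcond : Γ < PT * (∑ i, Complex.normSq (h i)) / (N * σ2))
    (W R : Matrix (Fin N) (Fin N) ℂ)
    (hW : W = ((PT / N / ∑ i, Complex.normSq (h i) : ℝ) : ℂ) • vecMulVec h (star h))
    (hR : R = ((PT / N : ℝ) : ℂ) • (1 : Matrix (Fin N) (Fin N) ℂ)) :
    P2Optimal h Γ σ2 PT R W ∧ (trace R⁻¹).re = (N : ℝ) ^ 2 / PT := by
  have hN0 : (0 : ℝ) < N := by exact_mod_cast hN
  have hhS := star_dotProduct_self_eq h
  have hS : 0 < ∑ i, Complex.normSq (h i) := by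
    obtain ⟨i, hi⟩ := Function.ne_iff.1 hh
    exact Finset.sum_pos' (fun j _ => Complex.normSq_nonneg _)
      ⟨i, Finset.mem_univ i, Complex.normSq_pos.2 hi⟩
  generalize (∑ i, Complex.normSq (h i)) = S at *
  have ha : 0 < PT / N := by positivity
  have hac : (0 : ℂ) < ((PT / N : ℝ) : ℂ) := by exact_mod_cast ha
  have hRinv : (trace R⁻¹).re = (N : ℝ) ^ 2 / PT := by
    have hinv : R⁻¹ = ((N / PT : ℝ) : ℂ) • (1 : Matrix (Fin N) (Fin N) ℂ) := by
      apply Matrix.inv_eq_right_inv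
      have hmul : PT / N * (N / PT) = 1 := by field_simp
      rw [hR, smul_mul_smul_comm, mul_one, ← Complex.ofReal_mul, hmul, Complex.ofReal_one, one_smul]
    rw [hinv, trace_smul, trace_one, Fintype.card_fin, smul_eq_mul, Complex.re_ofReal_mul,
      Complex.natCast_re]
    ring
  have hRh : (star h ⬝ᵥ R *ᵥ h).re = PT / N * S := by
    rw [hR, smul_mulVec, one_mulVec, dotProduct_smul, hhS, smul_eq_mul, ← Complex.ofReal_mul,
      Complex.ofReal_re]
  have hWh : (star h ⬝ᵥ W *ᵥ h).re = PT / N * S := by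
    have hv : star h ⬝ᵥ vecMulVec h (star h) *ᵥ h = ((S * S : ℝ) : ℂ) := by
      rw [vecMulVec_mulVec, hhS, dotProduct_smul, hhS]
      simp
    rw [hW, smul_mulVec, dotProduct_smul, hv, smul_eq_mul, ← Complex.ofReal_mul, Complex.ofReal_re]
    field_simp
  refine ⟨⟨⟨?_, ?_, ?_, ?_, ?_⟩, ?_⟩, hRinv⟩
  · rw [hR]
    exact Matrix.PosDef.one.smul hac
  · rw [hW]
    exact (posSemidef_vecMulVec_self_star h).smul (by exact_mod_cast (div_pos ha hS).le)
  · have hRW : R - W = ((PT / N : ℝ) : ℂ) • (1 - ((S⁻¹ : ℝ) : ℂ) • vecMulVec h (star h)) := by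
      rw [hR, hW, smul_sub, smul_smul, ← Complex.ofReal_mul, div_eq_mul_inv (PT / N) S]
    rw [hRW]
    exact (one_sub_proj_posSemidef h hS.ne' hhS).smul hac.le
  · rw [hR, trace_smul, trace_one, Fintype.card_fin, smul_eq_mul, Complex.re_ofReal_mul,
      Complex.natCast_re, div_mul_cancel₀ _ hN0.ne']
  · rw [hRh, hWh]
    rw [lt_div_iff₀ (by positivity)] at hcond
    have hle : Γ * σ2 ≤ PT / N * S := by
      rw [div_mul_eq_mul_div, le_div_iff₀ hN0]
      linarith
    linarith
  · rintro R' W' ⟨hpd, -, -, htr, -⟩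
    rw [hRinv]
    -- `c = N / PT` maximizes `2cN - c² PT`.
    refine le_trans ?_ (trace_inv_ge hpd (N / PT))
    have hle := mul_le_mul_of_nonneg_left htr (sq_nonneg ((N : ℝ) / PT))
    have heq : 2 * ((N : ℝ) / PT) * N - (N / PT) ^ 2 * PT = N ^ 2 / PT := by
      field_simp
      ring
    linarith
end

section
/- Consider Problem (P2) with N ≥ 2, and assume P_T‖h‖²/(N σ²) ≤ Γ < P_T‖h‖²/σ². Define λ₁ = Γσ²/‖h‖² and λ = (P_T‖h‖² − Γσ²)/((N−1)‖h‖²). Then the pair W = (Γσ²/‖h‖⁴) · h hᴴ and R = λ₁ · h hᴴ/‖h‖² + λ · (I − h hᴴ/‖h‖²) is an optimal solution of (P2), and the optimal value is ‖h‖²/(Γσ²) + (N−1)²‖h‖²/(P_T‖h‖² − Γσ²). -/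
/-!
With `P = h hᴴ / ‖h‖²` the orthogonal projection onto the line of `h`, the claimed optimum is
`R = λ₁ P + λ (1 - P)`, with inverse `A = λ₁⁻¹ P + λ⁻¹ (1 - P)`.

Optimality is a tangent-line (duality) bound for the convex function `X ↦ tr X⁻¹` at `R`: since
`(1 - A X) X⁻¹ (1 - A X)ᴴ ⪰ 0`, every positive definite `X` satisfies
`tr X⁻¹ ≥ 2 tr A - tr (A² X)` (`two_mul_trace_sub_le_trace_inv`).
For a feasible pair `(X, Y)`, `Y ⪯ X` turns the last constraint into `hᴴXh ≥ Γσ²`, that is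
`tr (P X) ≥ λ₁`. The lower bound on `Γ` says exactly that `λ ≤ λ₁`, so in
`tr (A² X) = λ⁻² tr X - (λ⁻² - λ₁⁻²) tr (P X)` the coefficient of `tr (P X)` is nonpositive, and
the two constraints `tr X ≤ P_T`, `tr (P X) ≥ λ₁` give
`tr (A² X) ≤ λ⁻² (P_T - λ₁) + λ₁⁻¹ = tr A`. Hence `tr X⁻¹ ≥ tr A`.
-/


open Matrix
open scoped ComplexOrder

/-- Two matrices that are diagonal with respect to the same splitting `1 = P + (1 - P)` multiply
coefficientwise. -/
lemma proj_comb_mul {N : ℕ} {P : Matrix (Fin N) (Fin N) ℂ} (hP : P * P = P) (a b c d : ℂ) :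
    (a • P + b • (1 - P)) * (c • P + d • (1 - P)) = (a * c) • P + (b * d) • (1 - P) := by
  have h1 : P * (1 - P) = 0 := by rw [mul_sub, hP, mul_one, sub_self]
  have h2 : (1 - P) * P = 0 := by rw [sub_mul, hP, one_mul, sub_self]
  have h3 : (1 - P) * (1 - P) = 1 - P := by rw [sub_mul, one_mul, h1, sub_zero]
  rw [add_mul, mul_add, mul_add]
  simp only [smul_mul_assoc, mul_smul_comm, hP, h1, h2, h3, smul_zero, smul_smul, add_zero,
    zero_add, mul_comm c a, mul_comm d b]

lemma posSemidef_of_proj {N : ℕ} {P : Matrix (Fin N) (Fin N) ℂ} (hPh : P.IsHermitian)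
    (hP : P * P = P) : P.PosSemidef := by
  have := posSemidef_conjTranspose_mul_self P
  rwa [hPh.eq, hP] at this

/-- The tangent-line bound for the convex function `X ↦ tr X⁻¹`, taken at the point with
inverse `A`. -/
lemma two_mul_trace_sub_le_trace_inv {N : ℕ} {X A : Matrix (Fin N) (Fin N) ℂ}
    (hX : X.PosDef) (hA : A.IsHermitian) :
    2 * (trace A).re - (trace (A * A * X)).re ≤ (trace X⁻¹).re := by
  have hdet : IsUnit X.det := (Matrix.isUnit_iff_isUnit_det X).1 hX.isUnit
  have h0 := (hX.inv.posSemidef.mul_mul_conjTranspose_same (1 - A * X)).trace_nonneg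
  have e : (1 - A * X) * X⁻¹ * (1 - A * X)ᴴ = X⁻¹ - A - A + A * X * A := by
    rw [conjTranspose_sub, conjTranspose_one, conjTranspose_mul, hA.eq, hX.isHermitian.eq,
      sub_mul, one_mul, mul_assoc A X, Matrix.mul_nonsing_inv X hdet, mul_one, sub_mul, mul_sub,
      mul_sub, mul_one, mul_one, ← mul_assoc X⁻¹, Matrix.nonsing_inv_mul X hdet, one_mul,
      ← mul_assoc]
    abel
  have e2 : trace (A * X * A) = trace (A * A * X) := by
    rw [trace_mul_comm, mul_assoc]
  rw [e, trace_add, trace_sub, trace_sub, e2] at h0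
  have h1 := (Complex.le_def.1 h0).1
  simp only [Complex.zero_re, Complex.add_re, Complex.sub_re] at h1
  linarith

/-- If `P_T‖h‖²/(Nσ²) ≤ Γ < P_T‖h‖²/σ²`, then with `λ₁ = Γσ²/‖h‖²` and
`λ = (P_T‖h‖² − Γσ²)/((N−1)‖h‖²)`, the pair `W = (Γσ²/‖h‖⁴)·hhᴴ`,
`R = λ₁·hhᴴ/‖h‖² + λ·(I − hhᴴ/‖h‖²)` is an optimal solution of (P2), with optimal
value `‖h‖²/(Γσ²) + (N−1)²‖h‖²/(P_T‖h‖² − Γσ²)`. -/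
theorem stmt13 {N : ℕ} (hN : 2 ≤ N) (h : Fin N → ℂ) (hh : h ≠ 0)
    (Γ σ2 PT : ℝ) (hΓ : 0 < Γ) (hσ : 0 < σ2) (hPT : 0 < PT)
    (nh : ℝ) (hnh : nh = ∑ i, Complex.normSq (h i))
    (hlow : PT * nh / (N * σ2) ≤ Γ) (hup : Γ < PT * nh / σ2)
    (lam1 lam : ℝ)
    (hlam1 : lam1 = Γ * σ2 / nh)
    (hlam : lam = (PT * nh - Γ * σ2) / ((N - 1 : ℝ) * nh))
    (W R : Matrix (Fin N) (Fin N) ℂ)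
    (hW : W = ((Γ * σ2 / nh ^ 2 : ℝ) : ℂ) • vecMulVec h (star h))
    (hR : R = (lam1 : ℂ) • (((nh⁻¹ : ℝ) : ℂ) • vecMulVec h (star h))
      + (lam : ℂ) • ((1 : Matrix (Fin N) (Fin N) ℂ)
          - ((nh⁻¹ : ℝ) : ℂ) • vecMulVec h (star h))) :
    P2Optimal h Γ σ2 PT R W ∧
    (trace R⁻¹).re = nh / (Γ * σ2) + (N - 1 : ℝ) ^ 2 * nh / (PT * nh - Γ * σ2) := by
  have hN1 : (0 : ℝ) < (N : ℝ) - 1 := by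
    have : (2 : ℝ) ≤ N := by exact_mod_cast hN
    linarith
  have hdot : star h ⬝ᵥ h = (nh : ℂ) := by
    rw [hnh, dotProduct, Complex.ofReal_sum]
    refine Finset.sum_congr rfl fun i _ => ?_
    rw [Complex.normSq_eq_conj_mul_self]; rfl
  have hnh0 : 0 < nh := by
    have := dotProduct_star_self_pos_iff.2 hh
    rw [hdot] at this
    exact_mod_cast this
  have hnhC : (nh : ℂ) ≠ 0 := by exact_mod_cast hnh0.ne'
  have hgs : 0 < Γ * σ2 := mul_pos hΓ hσ
  have hgap : 0 < PT * nh - Γ * σ2 := by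
    rw [lt_div_iff₀ hσ] at hup
    linarith
  have hl1 : 0 < lam1 := by rw [hlam1]; positivity
  have hl : 0 < lam := by rw [hlam]; positivity
  have hle : lam ≤ lam1 := by
    rw [div_le_iff₀ (by positivity)] at hlow
    rw [hlam, hlam1, div_le_div_iff₀ (by positivity) hnh0]
    nlinarith
  have hsum : lam1 + ((N : ℝ) - 1) * lam = PT := by
    rw [hlam, hlam1]; field_simp; ring
  have hl1nh : lam1 * nh = Γ * σ2 := by rw [hlam1]; field_simp
  set P : Matrix (Fin N) (Fin N) ℂ := ((nh⁻¹ : ℝ) : ℂ) • vecMulVec h (star h) with hPdef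
  clear_value P
  have hPh : P.IsHermitian := by
    rw [IsHermitian, hPdef, conjTranspose_smul, conjTranspose_vecMulVec, star_star]
    simp
  have hPP : P * P = P := by
    rw [hPdef, smul_mul_assoc, mul_smul_comm, vecMulVec_mul_vecMulVec, hdot]
    rw [vecMulVec_smul, smul_smul, smul_smul]
    congr 1
    push_cast
    field_simp
  have htrPX (X : Matrix (Fin N) (Fin N) ℂ) :
      trace (P * X) = ((nh⁻¹ : ℝ) : ℂ) * (star h ⬝ᵥ X *ᵥ h) := by
    rw [trace_mul_comm, hPdef, mul_smul_comm, mul_vecMulVec, trace_smul, trace_vecMulVec,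
      dotProduct_comm, smul_eq_mul]
  have htrP : trace P = 1 := by
    have := htrPX 1
    rw [mul_one, one_mulVec, hdot] at this
    rw [this]; push_cast; field_simp
  have htrQ : trace (1 - P) = (N : ℂ) - 1 := by
    rw [trace_sub, htrP, trace_one, Fintype.card_fin]
  have hQh : (1 - P).IsHermitian := isHermitian_one.sub hPh
  have hQQ : (1 - P) * (1 - P) = 1 - P := by
    rw [sub_mul, one_mul, mul_sub, hPP, mul_one, sub_self, sub_zero]
  have hPpos := posSemidef_of_proj hPh hPP
  have hQpos := posSemidef_of_proj hQh hQQ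
  have htrcomb (a b : ℝ) :
      (trace ((a : ℂ) • P + (b : ℂ) • (1 - P))).re = a + ((N : ℝ) - 1) * b := by
    rw [trace_add, trace_smul, trace_smul, htrP, htrQ]
    simp
    ring
  have hl1C : (lam1 : ℂ) ≠ 0 := by exact_mod_cast hl1.ne'
  have hlC : (lam : ℂ) ≠ 0 := by exact_mod_cast hl.ne'
  set A : Matrix (Fin N) (Fin N) ℂ :=
    ((lam1⁻¹ : ℝ) : ℂ) • P + ((lam⁻¹ : ℝ) : ℂ) • (1 - P) with hAdef
  have hRA : R * A = 1 := by
    rw [hR, hAdef, proj_comb_mul hPP, Complex.ofReal_inv, Complex.ofReal_inv,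
      mul_inv_cancel₀ hl1C, mul_inv_cancel₀ hlC, one_smul, one_smul]
    abel
  have hRinv : R⁻¹ = A := inv_eq_right_inv hRA
  have hAh : A.IsHermitian := by
    rw [IsHermitian, hAdef, conjTranspose_add, conjTranspose_smul, conjTranspose_smul, hPh.eq,
      hQh.eq]
    simp
  have htrA : (trace A).re = lam1⁻¹ + ((N : ℝ) - 1) * lam⁻¹ := htrcomb _ _
  have hWP : W = (lam1 : ℂ) • P := by
    rw [hW, hPdef, smul_smul, hlam1]
    congr 1
    rw [← Complex.ofReal_mul]
    congr 1
    field_simp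
  have hRpsd : R.PosSemidef := by
    rw [hR]
    exact (hPpos.smul (by exact_mod_cast hl1.le)).add (hQpos.smul (by exact_mod_cast hl.le))
  have hRpd : R.PosDef :=
    hRpsd.posDef_iff_isUnit.2 (IsUnit.of_mul_eq_one A hRA)
  -- `hᴴ X h` is read off from `tr (P X)`.
  have hquad (X : Matrix (Fin N) (Fin N) ℂ) :
      (star h ⬝ᵥ X *ᵥ h).re = nh * (trace (P * X)).re := by
    rw [htrPX, Complex.re_ofReal_mul]
    field_simp
  refine ⟨⟨⟨hRpd, ?_, ?_, ?_, ?_⟩, ?_⟩, ?_⟩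
  · rw [hWP]
    exact hPpos.smul (by exact_mod_cast hl1.le)
  · rw [hWP, hR, add_sub_cancel_left]
    exact hQpos.smul (by exact_mod_cast hl.le)
  · rw [hR, htrcomb, hsum]
  · have e1 : P * W = (lam1 : ℂ) • P := by rw [hWP, mul_smul_comm, hPP]
    have e2 : P * R = (lam1 : ℂ) • P := by
      rw [hR, mul_add, mul_smul_comm, mul_smul_comm, hPP, mul_sub, mul_one, hPP, sub_self,
        smul_zero, add_zero]
    rw [hquad, hquad, e1, e2, trace_smul, htrP, smul_eq_mul, mul_one, Complex.ofReal_re]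
    rw [mul_comm nh, hl1nh]
    linarith
  · rintro X Y ⟨hX, -, hXY, htr, hsinr⟩
    rw [hRinv]
    have hbound := two_mul_trace_sub_le_trace_inv hX hAh
    have hdiff : (star h ⬝ᵥ Y *ᵥ h).re ≤ (star h ⬝ᵥ X *ᵥ h).re := by
      have := (Complex.le_def.1 (hXY.dotProduct_mulVec_nonneg h)).1
      rw [sub_mulVec, dotProduct_sub, Complex.sub_re, Complex.zero_re] at this
      linarith
    have hq : Γ * σ2 ≤ (star h ⬝ᵥ X *ᵥ h).re := by nlinarith
    have ht : lam1 ≤ (trace (P * X)).re := by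
      rw [hquad, ← hl1nh, mul_comm nh] at hq
      exact le_of_mul_le_mul_right hq hnh0
    have hAAX : (trace (A * A * X)).re =
        lam⁻¹ ^ 2 * (trace X).re - (lam⁻¹ ^ 2 - lam1⁻¹ ^ 2) * (trace (P * X)).re := by
      rw [hAdef, proj_comb_mul hPP, ← Complex.ofReal_mul, ← Complex.ofReal_mul, add_mul,
        smul_mul_assoc, smul_mul_assoc, sub_mul, one_mul, trace_add, trace_smul, trace_smul,
        trace_sub, smul_eq_mul, smul_eq_mul, Complex.add_re, Complex.re_ofReal_mul,
        Complex.re_ofReal_mul, Complex.sub_re]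
      ring
    have hinv : lam1⁻¹ ^ 2 ≤ lam⁻¹ ^ 2 := by gcongr
    have key : lam⁻¹ ^ 2 * (trace X).re - (lam⁻¹ ^ 2 - lam1⁻¹ ^ 2) * (trace (P * X)).re
        ≤ lam⁻¹ ^ 2 * PT - (lam⁻¹ ^ 2 - lam1⁻¹ ^ 2) * lam1 :=
      sub_le_sub (mul_le_mul_of_nonneg_left htr (by positivity))
        (mul_le_mul_of_nonneg_left ht (sub_nonneg.2 hinv))
    have hval : lam⁻¹ ^ 2 * PT - (lam⁻¹ ^ 2 - lam1⁻¹ ^ 2) * lam1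
        = lam1⁻¹ + ((N : ℝ) - 1) * lam⁻¹ := by
      rw [← hsum]; field_simp; ring
    linarith
  · rw [hRinv, htrA, hlam1, hlam, inv_div, inv_div]
    ring
end

section
/- Let N ≥ 2 be an integer and let P, c be reals with 0 < c < P. Consider minimizing Σ_{i=1}^N 1/λ_i over real vectors (λ₁,…,λ_N) with λ_i > 0 for all i, λ₁ ≥ c, and Σ_{i=1}^N λ_i ≤ P. (i) If c ≤ P/N, the minimum value is N²/P, attained at λ_i = P/N for all i. (ii) If c > P/N, the minimum value is 1/c + (N−1)²/(P−c), attained at λ₁ = c and λ_i = (P−c)/(N−1) for i = 2,…,N. -/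
/-!
The proof is a tangent-line (Lagrange multiplier) argument. The convex function `x ↦ 1/x` lies above
its tangent at any `t > 0`, so `∑ 1/λᵢ ≥ 2n/t - (∑ λᵢ)/t²` for any `n` positive reals
(`sum_inv_tangent`). With `t = P/N` this is the bound in (i). In (ii), it is applied with
`t = (P - c)/(N - 1)` to the coordinates other than `λ₁`, and the tangent at `c` is used for `λ₁`;
the two bounds add up to the claimed minimum plus `(λ₁ - c)(1/t² - 1/c²)`, which is nonnegative
because `λ₁ ≥ c` and the assumption `c > P/N` says exactly that `t < c`.
-/

lemma inv_tangent {x t : ℝ} (hx : 0 < x) (ht : 0 < t) : 2 / t - x / t ^ 2 ≤ x⁻¹ := by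
  have h : x⁻¹ - (2 / t - x / t ^ 2) = (x - t) ^ 2 / (x * t ^ 2) := by
    field_simp
    ring
  have h2 : 0 ≤ (x - t) ^ 2 / (x * t ^ 2) := by positivity
  linarith

lemma sum_inv_tangent {n : ℕ} {f : Fin n → ℝ} (hf : ∀ i, 0 < f i) {t : ℝ} (ht : 0 < t) :
    n * (2 / t) - (∑ i, f i) / t ^ 2 ≤ ∑ i, (f i)⁻¹ := by
  calc n * (2 / t) - (∑ i, f i) / t ^ 2 = ∑ i, (2 / t - f i / t ^ 2) := by
        simp [Finset.sum_sub_distrib, Finset.sum_div]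
    _ ≤ _ := Finset.sum_le_sum fun i _ => inv_tangent (hf i) ht

/-- Minimizing `Σᵢ 1/λᵢ` over `λᵢ > 0` with `λ₁ ≥ c` and `Σᵢ λᵢ ≤ P`, where
`0 < c < P` and `N ≥ 2`:
(i) if `c ≤ P/N`, the minimum value `N²/P` is attained at `λᵢ = P/N` for all `i`;
(ii) if `c > P/N`, the minimum value `1/c + (N−1)²/(P−c)` is attained at `λ₁ = c`
and `λᵢ = (P−c)/(N−1)` for `i ≥ 2`. -/
theorem stmt14 (N : ℕ) (hN : 2 ≤ N) (P c : ℝ) (hc : 0 < c) (hcP : c < P) :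
    (c ≤ P / N →
      (∀ lam : Fin N → ℝ, (∀ i, 0 < lam i) → c ≤ lam ⟨0, by omega⟩ → (∑ i, lam i) ≤ P →
        (N : ℝ) ^ 2 / P ≤ ∑ i, (lam i)⁻¹) ∧
      (∃ lam : Fin N → ℝ, (∀ i, 0 < lam i) ∧ c ≤ lam ⟨0, by omega⟩ ∧ (∑ i, lam i) ≤ P ∧
        (∀ i, lam i = P / N) ∧ (∑ i, (lam i)⁻¹) = (N : ℝ) ^ 2 / P))
    ∧ (P / N < c →
      (∀ lam : Fin N → ℝ, (∀ i, 0 < lam i) → c ≤ lam ⟨0, by omega⟩ → (∑ i, lam i) ≤ P →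
        1 / c + (N - 1 : ℝ) ^ 2 / (P - c) ≤ ∑ i, (lam i)⁻¹) ∧
      (∃ lam : Fin N → ℝ, (∀ i, 0 < lam i) ∧ c ≤ lam ⟨0, by omega⟩ ∧ (∑ i, lam i) ≤ P ∧
        lam ⟨0, by omega⟩ = c ∧ (∀ i : Fin N, i ≠ ⟨0, by omega⟩ → lam i = (P - c) / (N - 1 : ℝ)) ∧
        (∑ i, (lam i)⁻¹) = 1 / c + (N - 1 : ℝ) ^ 2 / (P - c))) := by
  obtain ⟨n, rfl⟩ : ∃ n, N = n + 1 := ⟨N - 1, by omega⟩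
  have hP : 0 < P := hc.trans hcP
  have hn : (0 : ℝ) < n := by exact_mod_cast (by omega : 0 < n)
  have hN0 : (0 : ℝ) < ((n + 1 : ℕ) : ℝ) := by positivity
  have hd : 0 < P - c := sub_pos.2 hcP
  have hcast : ((n + 1 : ℕ) : ℝ) - 1 = n := by push_cast; ring
  rw [hcast]
  refine ⟨fun h => ⟨fun lam hpos _ hsum => ?_, fun _ => P / (n + 1 : ℕ), fun _ => by positivity, h,
    ?_, fun _ => rfl, ?_⟩, fun h => ⟨fun lam hpos h0 hsum => ?_,
    Fin.cons c fun _ => (P - c) / n, ?_, ?_, ?_, rfl, ?_, ?_⟩⟩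
  · have ht : 0 < P / (n + 1 : ℕ) := by positivity
    have h1 := sum_inv_tangent hpos ht
    have h2 := div_le_div_of_nonneg_right hsum (sq_nonneg (P / (n + 1 : ℕ)))
    have h3 : ((n + 1 : ℕ) : ℝ) * (2 / (P / (n + 1 : ℕ))) - P / (P / (n + 1 : ℕ)) ^ 2
        = ((n + 1 : ℕ) : ℝ) ^ 2 / P := by
      field_simp
      ring
    linarith
  · rw [Finset.sum_const, Finset.card_univ, Fintype.card_fin, nsmul_eq_mul]
    exact (mul_div_cancel₀ P hN0.ne').le
  · rw [Finset.sum_const, Finset.card_univ, Fintype.card_fin, nsmul_eq_mul]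
    field_simp
  · change c ≤ lam 0 at h0
    rw [Fin.sum_univ_succ] at hsum ⊢
    obtain ⟨t, ht_def⟩ : ∃ t, t = (P - c) / n := ⟨_, rfl⟩
    have ht : 0 < t := by rw [ht_def]; positivity
    have hPc : P - c = n * t := by rw [ht_def]; field_simp
    have htc : t ≤ c := by
      rw [div_lt_iff₀ hN0] at h
      push_cast at h
      rw [ht_def, div_le_iff₀ hn]
      linarith
    have h1 := sum_inv_tangent (fun i : Fin n => hpos i.succ) ht
    have h2 := inv_tangent (hpos 0) hc
    have h3 := div_le_div_of_nonneg_right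
      (show ∑ i : Fin n, lam i.succ ≤ n * t + c - lam 0 by linarith) (sq_nonneg t)
    have h4 : 1 / c ^ 2 ≤ 1 / t ^ 2 := by gcongr
    have h5 := mul_nonneg (sub_nonneg.2 h0) (sub_nonneg.2 h4)
    have h6 : (2 / c - lam 0 / c ^ 2) + (n * (2 / t) - (n * t + c - lam 0) / t ^ 2)
        = 1 / c + (n : ℝ) ^ 2 / (n * t) + (lam 0 - c) * (1 / t ^ 2 - 1 / c ^ 2) := by
      field_simp
      ring
    rw [hPc]
    linarith
  · intro i
    refine Fin.cases ?_ (fun j => ?_) i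
    · simpa using hc
    · simp only [Fin.cons_succ]
      positivity
  · exact le_rfl
  · rw [Fin.sum_univ_succ]
    simp only [Fin.cons_zero, Fin.cons_succ, Finset.sum_const, Finset.card_univ, Fintype.card_fin,
      nsmul_eq_mul]
    rw [mul_div_cancel₀ _ hn.ne']
    linarith
  · intro i
    refine Fin.cases (fun h => absurd rfl h) (fun j _ => ?_) i
    simp only [Fin.cons_succ]
  · rw [Fin.sum_univ_succ]
    simp only [Fin.cons_zero, Fin.cons_succ, Finset.sum_const, Finset.card_univ, Fintype.card_fin,
      nsmul_eq_mul]
    field_simp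
end

section
/- Consider Problem (P3) and let (R̄, W̄₁,…,W̄_K) be an optimal solution. For each k, the SINR constraint forces h_kᴴ W̄_k h_k > 0; define W̃_k = (W̄_k h_k h_kᴴ W̄_k)/(h_kᴴ W̄_k h_k). Then (R̄, W̃₁,…,W̃_K) is also an optimal solution of (P3), and rank(W̃_k) = 1 for every k = 1,…,K. -/
/-!
Replacing each `W_k` by `W̃_k = c⁻¹ W_k h_k h_kᴴ W_k`, with `c = h_kᴴ W_k h_k`, leaves `R` and hence
the objective and the power constraint untouched, so only feasibility has to be checked. The
SINR constraints are unchanged because `h_kᴴ W̃_k h_k = h_kᴴ W_k h_k`, and the constraint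
`R - ∑ W̃_k ⪰ 0` follows from `W̃_k ⪯ W_k`. The latter (`posSemidef_sub_compress`) is a generalized
Cauchy–Schwarz inequality, witnessed by the identity `W - W̃ = Pᴴ W P` with
`P = 1 - c⁻¹ h hᴴ W`, the projection along `h` onto its `W`-orthogonal complement. Finally `W̃_k` is a
multiple of an outer product, so its rank is at most one, and it is nonzero since its quadratic form
at `h_k` equals `c`. Positivity of `c` comes from the SINR constraint, which gives
`(1 + Γ_k) c ≥ Γ_k σ² + Γ_k h_kᴴ R h_k > 0`.
-/

open Matrix
open scoped ComplexOrder

/-- Feasibility for Problem (P3): `R ≻ 0`, each `W_k ⪰ 0`, `R − Σ_k W_k ⪰ 0`,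
`tr(R) ≤ P_T`, and the SINR constraints
`(1+Γ_k)(h_kᴴW_kh_k) − Γ_k(h_kᴴRh_k) ≥ Γ_kσ²` for every `k`. -/
def P3Feasible {N K : ℕ} (h : Fin K → Fin N → ℂ) (Γ : Fin K → ℝ) (σ2 PT : ℝ)
    (R : Matrix (Fin N) (Fin N) ℂ) (W : Fin K → Matrix (Fin N) (Fin N) ℂ) : Prop :=
  R.PosDef ∧ (∀ k, (W k).PosSemidef) ∧ (R - ∑ k, W k).PosSemidef ∧
  (trace R).re ≤ PT ∧
  ∀ k, Γ k * σ2 ≤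
    (1 + Γ k) * (star (h k) ⬝ᵥ (W k) *ᵥ h k).re
      - Γ k * (star (h k) ⬝ᵥ R *ᵥ h k).re

/-- Optimality for Problem (P3): feasible, and `tr(R⁻¹)` at most that of every
feasible tuple. -/
def P3Optimal {N K : ℕ} (h : Fin K → Fin N → ℂ) (Γ : Fin K → ℝ) (σ2 PT : ℝ)
    (R : Matrix (Fin N) (Fin N) ℂ) (W : Fin K → Matrix (Fin N) (Fin N) ℂ) : Prop :=
  P3Feasible h Γ σ2 PT R W ∧
  ∀ (R' : Matrix (Fin N) (Fin N) ℂ) (W' : Fin K → Matrix (Fin N) (Fin N) ℂ),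
    P3Feasible h Γ σ2 PT R' W' → (trace R⁻¹).re ≤ (trace R'⁻¹).re

/-- The compression `W̃ = (W h hᴴ W) / (hᴴ W h)`; it is zero when `hᴴ W h = 0`. -/
noncomputable def compress {N : ℕ} (W : Matrix (Fin N) (Fin N) ℂ) (h : Fin N → ℂ) :
    Matrix (Fin N) (Fin N) ℂ :=
  (star h ⬝ᵥ W *ᵥ h)⁻¹ • (W * vecMulVec h (star h) * W)

lemma vecMulVec_mul_mul_vecMulVec {N : ℕ} (W : Matrix (Fin N) (Fin N) ℂ) (h : Fin N → ℂ) :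
    vecMulVec h (star h) * W * vecMulVec h (star h)
      = (star h ⬝ᵥ W *ᵥ h) • vecMulVec h (star h) := by
  rw [vecMulVec_mul, vecMulVec_mul_vecMulVec, ← dotProduct_mulVec, vecMulVec_smul]

/-- The compression keeps the quadratic form at `h`, so the SINR constraints are unaffected. -/
lemma compress_quadForm {N : ℕ} (W : Matrix (Fin N) (Fin N) ℂ) (h : Fin N → ℂ)
    (hc : star h ⬝ᵥ W *ᵥ h ≠ 0) :
    star h ⬝ᵥ compress W h *ᵥ h = star h ⬝ᵥ W *ᵥ h := by
  have key : (W * vecMulVec h (star h) * W) *ᵥ h = (star h ⬝ᵥ W *ᵥ h) • (W *ᵥ h) := by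
    rw [← mulVec_mulVec, ← mulVec_mulVec, vecMulVec_mulVec]
    simp [mulVec_smul]
  rw [compress, smul_mulVec, key, smul_smul, inv_mul_cancel₀ hc, one_smul]

lemma compress_posSemidef {N : ℕ} {W : Matrix (Fin N) (Fin N) ℂ} (hW : W.PosSemidef)
    (h : Fin N → ℂ) : (compress W h).PosSemidef := by
  have h1 := (posSemidef_vecMulVec_self_star h).mul_mul_conjTranspose_same W
  rw [hW.isHermitian.eq] at h1
  exact h1.smul (inv_nonneg.2 (hW.dotProduct_mulVec_nonneg h))

/-- The compression is dominated by `W` in the Loewner order. -/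
lemma posSemidef_sub_compress {N : ℕ} {W : Matrix (Fin N) (Fin N) ℂ} (hW : W.PosSemidef)
    (h : Fin N → ℂ) (hc : star h ⬝ᵥ W *ᵥ h ≠ 0) : (W - compress W h).PosSemidef := by
  have hreal : star (star h ⬝ᵥ W *ᵥ h) = star h ⬝ᵥ W *ᵥ h :=
    (IsSelfAdjoint.of_nonneg (hW.dotProduct_mulVec_nonneg h)).star_eq
  have hV := vecMulVec_mul_mul_vecMulVec W h
  have hVh : (vecMulVec h (star h))ᴴ = vecMulVec h (star h) :=
    (posSemidef_vecMulVec_self_star h).isHermitian.eq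
  unfold compress
  generalize star h ⬝ᵥ W *ᵥ h = c at *
  generalize vecMulVec h (star h) = V at *
  have h1 := hW.conjTranspose_mul_mul_same (1 - c⁻¹ • (V * W))
  convert h1 using 1
  rw [conjTranspose_sub, conjTranspose_one, conjTranspose_smul, conjTranspose_mul, hVh,
    hW.isHermitian.eq, star_inv₀, hreal]
  have h2 : W * V * W * (V * W) = c • (W * V * W) := by
    calc W * V * W * (V * W) = W * (V * W * V) * W := by simp only [Matrix.mul_assoc]
      _ = _ := by rw [hV]; simp
  simp only [sub_mul, mul_sub, Matrix.one_mul, Matrix.mul_one, Matrix.smul_mul, Matrix.mul_smul,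
    smul_smul, ← Matrix.mul_assoc]
  simp only [← Matrix.mul_assoc] at h2
  rw [h2, smul_smul, inv_mul_cancel_right₀ hc]
  abel

lemma compress_rank {N : ℕ} (W : Matrix (Fin N) (Fin N) ℂ) (h : Fin N → ℂ)
    (hc : star h ⬝ᵥ W *ᵥ h ≠ 0) : (compress W h).rank = 1 := by
  have hle : (compress W h).rank ≤ 1 := by
    rw [compress, mul_vecMulVec, vecMulVec_mul, ← smul_vecMulVec]
    exact rank_vecMulVec_le _ _
  have : (compress W h).rank ≠ 0 := by
    intro h0
    rw [Matrix.rank, Submodule.finrank_eq_zero, LinearMap.range_eq_bot] at h0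
    apply hc
    rw [← compress_quadForm W h hc, ← mulVecLin_apply, h0]
    simp
  omega

/-- Given an optimal solution `(R̄, W̄₁,…,W̄_K)` of (P3), the SINR constraints force
`h_kᴴW̄_kh_k > 0`; the replacement `W̃_k = (W̄_k h_k h_kᴴ W̄_k)/(h_kᴴ W̄_k h_k)` keeps
the tuple optimal, and every `W̃_k` has rank one. -/
theorem stmt16 {N K : ℕ} (h : Fin K → Fin N → ℂ) (hh : ∀ k, h k ≠ 0)
    (Γ : Fin K → ℝ) (σ2 PT : ℝ) (hΓ : ∀ k, 0 < Γ k) (hσ : 0 < σ2) (hPT : 0 < PT)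
    (R : Matrix (Fin N) (Fin N) ℂ) (W : Fin K → Matrix (Fin N) (Fin N) ℂ)
    (hopt : P3Optimal h Γ σ2 PT R W) :
    (∀ k, 0 < (star (h k) ⬝ᵥ (W k) *ᵥ h k).re) ∧
    P3Optimal h Γ σ2 PT R (fun k =>
      (star (h k) ⬝ᵥ (W k) *ᵥ h k)⁻¹ •
        ((W k) * vecMulVec (h k) (star (h k)) * (W k))) ∧
    (∀ k, ((star (h k) ⬝ᵥ (W k) *ᵥ h k)⁻¹ •
        ((W k) * vecMulVec (h k) (star (h k)) * (W k))).rank = 1) := by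
  obtain ⟨⟨hR, hW, hS, htr, hsinr⟩, hmin⟩ := hopt
  have hpos : ∀ k, 0 < (star (h k) ⬝ᵥ (W k) *ᵥ h k).re := by
    intro k
    have hRk : 0 ≤ (star (h k) ⬝ᵥ R *ᵥ h k).re :=
      (Complex.le_def.1 (hR.posSemidef.dotProduct_mulVec_nonneg (h k))).1
    have h1 := mul_nonneg (hΓ k).le hRk
    have h2 := mul_pos (hΓ k) hσ
    have h3 := hsinr k
    have h4 : 0 < 1 + Γ k := by linarith [hΓ k]
    exact pos_of_mul_pos_right (by linarith) h4.le
  have hc : ∀ k, star (h k) ⬝ᵥ (W k) *ᵥ h k ≠ 0 := by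
    intro k h0
    have := hpos k
    simp [h0] at this
  refine ⟨hpos, ⟨⟨hR, fun k => compress_posSemidef (hW k) (h k), ?_, htr, fun k => ?_⟩, hmin⟩,
    fun k => compress_rank (W k) (h k) (hc k)⟩
  · change (R - ∑ k, compress (W k) (h k)).PosSemidef
    have h1 : (∑ k, (W k - compress (W k) (h k))).PosSemidef :=
      posSemidef_sum _ fun k _ => posSemidef_sub_compress (hW k) (h k) (hc k)
    have h2 := hS.add h1
    rwa [Finset.sum_sub_distrib, sub_add_sub_cancel] at h2
  · change _ ≤ (1 + Γ k) * (star (h k) ⬝ᵥ compress (W k) (h k) *ᵥ h k).re - _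
    rw [compress_quadForm (W k) (h k) (hc k)]
    exact hsinr k
end
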